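/- arXiv:math-ph/0102029 — 2 statements merged into one kernel-verified Lean document; each statement's English description precedes it below -/
import Mathlib

section
/- Suppose q1 and q2 are continuous real-valued potentials on [0,1], each symmetric about the midpoint (qi(1/2 + x) = qi(1/2 − x) for all x ∈ [0,1/2], i = 1,2), a is an admissible boundary pulse, and u1, u2 are classical solutions of the heat problem for q1 and q2 respectively, with the same boundary data a. If ∂x u1(0,t) = ∂x u2(0,t) for all t > 0, then q1 = q2 on [0,1]. -/
/-- An admissible boundary pulse: integrable on `(0,∞)`, vanishing beyond some
`T > 0`, and not almost everywhere zero. -/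
def IsAdmissiblePulse (a : ℝ → ℝ) : Prop :=
  MeasureTheory.IntegrableOn a (Set.Ioi 0) ∧
  (∃ T > (0:ℝ), ∀ t > T, a t = 0) ∧
  ¬ (a =ᵐ[MeasureTheory.volume.restrict (Set.Ioi 0)] 0)

/-- `u` (with partial derivatives `ux`, `uxx` in `x` and `ut` in `t`) is a
classical solution of `u_t = u_xx - q(x) u` on `[0,1] × (0,∞)` with zero initial
data, `u(0,t) = 0` and `u(1,t) = a(t)`. -/
def IsHeatSolution (q a : ℝ → ℝ) (u ux uxx ut : ℝ → ℝ → ℝ) : Prop :=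
  ContinuousOn (fun p : ℝ × ℝ => u p.1 p.2) (Set.Icc 0 1 ×ˢ Set.Ici 0) ∧
  (∀ t > (0:ℝ), ∀ x ∈ Set.Icc (0:ℝ) 1, HasDerivAt (fun y => u y t) (ux x t) x) ∧
  (∀ t > (0:ℝ), ∀ x ∈ Set.Icc (0:ℝ) 1, HasDerivAt (fun y => ux y t) (uxx x t) x) ∧
  (∀ t > (0:ℝ), ContinuousOn (fun x => uxx x t) (Set.Icc 0 1)) ∧
  (∀ x ∈ Set.Icc (0:ℝ) 1, ∀ t > (0:ℝ), HasDerivAt (fun s => u x s) (ut x t) t) ∧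
  (∀ x ∈ Set.Icc (0:ℝ) 1, ContinuousOn (fun t => ut x t) (Set.Ioi 0)) ∧
  (∀ x ∈ Set.Ioo (0:ℝ) 1, ∀ t > (0:ℝ), ut x t = uxx x t - q x * u x t) ∧
  (∀ x ∈ Set.Icc (0:ℝ) 1, u x 0 = 0) ∧
  (∀ t > (0:ℝ), u 0 t = 0 ∧ u 1 t = a t)

/-- Exponential growth bound `|u| + |u_x| ≤ C e^{c t}` on `[0,1] × [0,∞)`. -/
def HeatGrowthBound (u ux : ℝ → ℝ → ℝ) (C c : ℝ) : Prop :=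
  ∀ x ∈ Set.Icc (0:ℝ) 1, ∀ t ∈ Set.Ici (0:ℝ), |u x t| + |ux x t| ≤ C * Real.exp (c * t)

/-!
Testing the heat equation against `e^{-st} φ(1 - x, s)`, where `φ'' = (q + s) φ`, `φ(0, s) = 0`,
`φ'(0, s) = 1`, gives `L[a](s) = φ(1, s) L[∂ₓu(0, ·)](s)` for Laplace transforms on a half-plane.
Since `L[a]` is analytic and not identically zero, equal fluxes force `φ₁(1, s) = φ₂(1, s)`, first
on the half-plane and then for all `s`. As `∂ₜu` is only known to be continuous in `t` for each `x`,
differentiating `∫₀¹ φ(1 - x, s) u(x, t) dx` under the integral needs a bound on the difference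
quotients in time, uniform in `x`; it comes from the maximum principle.

The common function `φ(1, ·)` determines a symmetric potential (Borg). At its zeros symmetry gives
`φᵢ(1 - x, s) = -φᵢ'(1, s) φᵢ(x, s)` with `φ₁'(1, s) = φ₂'(1, s) = ±1`, so there
`φ₁(x, s) φ₂(1 - x, s) - φ₂(x, s) φ₁(1 - x, s)` vanishes. Its quotient by `φ(1, s)` is therefore
entire, and it tends to zero on growing squares, hence is zero. Together with the Wronskian of
`φᵢ(x, s)` and `φᵢ(1 - x, s)` this gives `φ₁² = φ₂²` on `[0,1]`, and then `q₁ = q₂`.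
-/

open Filter MeasureTheory Set Topology
open scoped Interval

namespace HeatInverse

lemma eq_of_hasDerivAt_linear {𝕜 E : Type*} [NontriviallyNormedField 𝕜] [NormedAddCommGroup E]
    [NormedSpace ℝ E] [NormedSpace 𝕜 E] {B : ℝ → E →L[𝕜] E} (hB : Continuous B) {Y Z : ℝ → E}
    (hY : ∀ t, HasDerivAt Y (B t (Y t)) t) (hZ : ∀ t, HasDerivAt Z (B t (Z t)) t)
    (h₀ : Y 0 = Z 0) : Y = Z := by
  ext t
  obtain ⟨K, hK⟩ := (isCompact_Icc (a := -(|t| + 1)) (b := |t| + 1)).exists_bound_of_continuousOn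
    hB.continuousOn
  have hLip : ∀ τ ∈ Ioo (-(|t| + 1)) (|t| + 1), LipschitzOnWith K.toNNReal (B τ) univ :=
    fun τ hτ ↦ ((B τ).lipschitz.weaken (NNReal.coe_le_coe.1 ((hK τ (Ioo_subset_Icc_self hτ)).trans
      (Real.le_coe_toNNReal K)))).lipschitzOnWith
  have ht : 0 < |t| + 1 := by positivity
  exact ODE_solution_unique_of_mem_Ioo hLip (t₀ := 0) ⟨neg_lt_zero.2 ht, ht⟩
    (fun τ _ ↦ ⟨hY τ, mem_univ _⟩) (fun τ _ ↦ ⟨hZ τ, mem_univ _⟩) h₀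
    (abs_lt.1 (lt_add_one |t|))

lemma norm_intervalIntegral_le_of_norm_le_mul_pow {E : Type*} [NormedAddCommGroup E]
    [NormedSpace ℝ E] {f : ℝ → E} {C t : ℝ} {n : ℕ}
    (hf : ∀ τ ∈ Ι 0 t, ‖f τ‖ ≤ C * |τ| ^ n) :
    ‖∫ τ in (0 : ℝ)..t, f τ‖ ≤ C * (|t| ^ (n + 1) / (n + 1)) := by
  have hpow := integral_pow_abs_sub_uIoc (a := 0) (b := t) n
  simp only [sub_zero] at hpow
  rw [← hpow, ← integral_const_mul]
  refine intervalIntegral.norm_integral_le_integral_norm_uIoc.trans ?_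
  refine integral_mono_of_nonneg (.of_forall fun _ ↦ norm_nonneg _) ?_
    ((ae_restrict_iff' measurableSet_uIoc).2 (.of_forall hf))
  exact ((by fun_prop : Continuous fun τ : ℝ ↦ C * |τ| ^ n).intervalIntegrable 0 t).def'

section LinearODE

variable {E : Type*} [NormedAddCommGroup E] [NormedSpace ℂ E]

/-- The `n`-th term of the Picard series solving `∂Y/∂t = A z t Y`, `Y z 0 = v`. -/
noncomputable def picardTerm (A : ℂ → ℝ → E →L[ℂ] E) (v : E) : ℕ → ℂ → ℝ → E
  | 0 => fun _ _ ↦ v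
  | n + 1 => fun z t ↦ ∫ τ in (0 : ℝ)..t, A z τ (picardTerm A v n z τ)

/-- The solution of the linear differential equation `∂Y/∂t = A z t Y` depending on the complex
parameter `z`, with initial value `Y z 0 = v`, as the sum of its Picard series. -/
noncomputable def linearODESol (A : ℂ → ℝ → E →L[ℂ] E) (v : E) (z : ℂ) (t : ℝ) : E :=
  ∑' n, picardTerm A v n z t

variable {A : ℂ → ℝ → E →L[ℂ] E} {v : E}

lemma continuous_picardTerm (hA : Continuous A.uncurry) (n : ℕ) :
    Continuous (picardTerm A v n).uncurry := by
  induction n with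
  | zero => exact continuous_const
  | succ n ih =>
    exact intervalIntegral.continuous_parametric_intervalIntegral_of_continuous
      (f := fun (p : ℂ × ℝ) τ ↦ A p.1 τ (picardTerm A v n p.1 τ)) (by
        have h : Continuous fun r : (ℂ × ℝ) × ℝ ↦ (r.1.1, r.2) := by fun_prop
        exact (hA.comp h).clm_apply (ih.comp h)) continuous_snd

lemma continuous_apply_picardTerm (hA : Continuous A.uncurry) (n : ℕ) (z : ℂ) :
    Continuous fun τ ↦ A z τ (picardTerm A v n z τ) :=
  (hA.clm_apply (continuous_picardTerm hA n)).comp (Continuous.prodMk_right z)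

lemma norm_picardTerm_le {z : ℂ} {M t : ℝ} (hM : ∀ τ, |τ| ≤ |t| → ‖A z τ‖ ≤ M) (n : ℕ) :
    ‖picardTerm A v n z t‖ ≤ ‖v‖ * (M ^ n / n.factorial) * |t| ^ n := by
  induction n generalizing t with
  | zero => simp [picardTerm]
  | succ n ih =>
    have hM₀ : 0 ≤ M := (norm_nonneg _).trans (hM t le_rfl)
    have hint : ∀ τ ∈ Ι 0 t, ‖A z τ (picardTerm A v n z τ)‖ ≤
        M * (‖v‖ * (M ^ n / n.factorial)) * |τ| ^ n := by
      intro τ hτ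
      have hτt : |τ| ≤ |t| := by
        simpa using abs_sub_left_of_mem_uIcc (uIoc_subset_uIcc hτ)
      calc ‖A z τ (picardTerm A v n z τ)‖ ≤ ‖A z τ‖ * ‖picardTerm A v n z τ‖ :=
            (A z τ).le_opNorm _
        _ ≤ M * (‖v‖ * (M ^ n / n.factorial) * |τ| ^ n) := by
            gcongr
            exacts [hM τ hτt, ih fun r hr ↦ hM r (hr.trans hτt)]
        _ = _ := by ring
    refine (norm_intervalIntegral_le_of_norm_le_mul_pow hint).trans_eq ?_
    rw [Nat.factorial_succ]
    push_cast
    field_simp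
    ring

lemma exists_summable_bound_picardTerm (hA : Continuous A.uncurry) (v : E) (r R : ℝ) :
    ∃ b : ℕ → ℝ, Summable b ∧ ∀ n, ∀ z ∈ Metric.closedBall (0 : ℂ) r, ∀ t ∈ Icc (-R) R,
      ‖picardTerm A v n z t‖ ≤ b n := by
  obtain ⟨M, hM⟩ := ((isCompact_closedBall (0 : ℂ) r).prod (isCompact_Icc (a := -R) (b := R))
    ).exists_bound_of_continuousOn hA.continuousOn
  refine ⟨fun n ↦ ‖v‖ * ((M * R) ^ n / n.factorial),
    (Real.summable_pow_div_factorial (M * R)).mul_left _, fun n z hz t ht ↦ ?_⟩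
  have htR : |t| ≤ R := abs_le.2 ht
  have hM₀ : 0 ≤ M := (norm_nonneg _).trans (hM (z, t) ⟨hz, ht⟩)
  calc ‖picardTerm A v n z t‖ ≤ ‖v‖ * (M ^ n / n.factorial) * |t| ^ n :=
        norm_picardTerm_le (fun τ hτ ↦ hM (z, τ) ⟨hz, abs_le.1 (hτ.trans htR)⟩) n
    _ ≤ ‖v‖ * (M ^ n / n.factorial) * R ^ n := by gcongr
    _ = ‖v‖ * ((M * R) ^ n / n.factorial) := by ring

variable [CompleteSpace E]

lemma differentiable_intervalIntegral {F : ℂ → ℝ → E} (hF : Continuous F.uncurry)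
    (hd : ∀ t, Differentiable ℂ (F · t)) (a b : ℝ) :
    Differentiable ℂ fun z ↦ ∫ t in a..b, F z t := by
  intro z
  have hcont (w : ℂ) : Continuous (F w) := hF.comp (Continuous.prodMk_right w)
  obtain ⟨C, hC⟩ := ((isCompact_closedBall z 2).prod (isCompact_uIcc (a := a) (b := b))
    ).exists_bound_of_continuousOn hF.continuousOn
  have hmeas : StronglyMeasurable fun t ↦ deriv (F · t) z :=
    (stronglyMeasurable_deriv_with_param (f := fun t w ↦ F w t) (hF.comp continuous_swap)
      ).comp_measurable measurable_prodMk_right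
  have hbound : ∀ t ∈ Ι a b, ∀ w ∈ Metric.ball z 1, ‖deriv (F · t) w‖ ≤ C := by
    intro t ht w hw
    refine (Complex.norm_deriv_le_of_forall_mem_sphere_norm_le one_pos (hd t).diffContOnCl
      fun ζ hζ ↦ hC (ζ, t) ⟨?_, uIoc_subset_uIcc ht⟩).trans_eq (div_one C)
    rw [Metric.mem_ball] at hw
    rw [Metric.mem_sphere] at hζ
    exact Metric.mem_closedBall.2 ((dist_triangle ζ w z).trans (by linarith))
  exact (intervalIntegral.hasDerivAt_integral_of_dominated_loc_of_deriv_le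
    (Metric.ball_mem_nhds z one_pos) (.of_forall fun w ↦ (hcont w).aestronglyMeasurable)
    ((hcont z).intervalIntegrable a b) hmeas.aestronglyMeasurable (.of_forall hbound)
    intervalIntegrable_const (.of_forall fun t _ w _ ↦ (hd t w).hasDerivAt)).2.differentiableAt

lemma differentiable_picardTerm (hA : Continuous A.uncurry)
    (hAd : ∀ t, Differentiable ℂ (A · t)) (n : ℕ) (t : ℝ) :
    Differentiable ℂ (picardTerm A v n · t) := by
  induction n generalizing t with
  | zero => exact differentiable_const v
  | succ n ih =>
    exact differentiable_intervalIntegral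
      (F := fun z τ ↦ A z τ (picardTerm A v n z τ)) (hA.clm_apply (continuous_picardTerm hA n))
      (fun τ ↦ (hAd τ).clm_apply (ih τ)) 0 t

lemma hasDerivAt_picardTerm_succ (hA : Continuous A.uncurry) (n : ℕ) (z : ℂ)
    (t : ℝ) : HasDerivAt (picardTerm A v (n + 1) z) (A z t (picardTerm A v n z t)) t :=
  intervalIntegral.integral_hasDerivAt_right
    ((continuous_apply_picardTerm hA n z).intervalIntegrable 0 t)
    ((continuous_apply_picardTerm hA n z).stronglyMeasurableAtFilter _ _)
    (continuous_apply_picardTerm hA n z).continuousAt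

lemma summable_picardTerm (hA : Continuous A.uncurry) (z : ℂ) (t : ℝ) :
    Summable fun n ↦ picardTerm A v n z t := by
  obtain ⟨b, hb, hle⟩ := exists_summable_bound_picardTerm hA v ‖z‖ |t|
  exact .of_norm_bounded hb fun n ↦ hle n z (by simp) t (abs_le.1 le_rfl)

lemma linearODESol_eq_add_tsum (hA : Continuous A.uncurry) (z : ℂ) (t : ℝ) :
    linearODESol A v z t = v + ∑' n, picardTerm A v (n + 1) z t :=
  (summable_picardTerm hA z t).tsum_eq_zero_add

lemma linearODESol_zero (hA : Continuous A.uncurry) (z : ℂ) : linearODESol A v z 0 = v := by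
  simp [linearODESol_eq_add_tsum hA, picardTerm]

lemma hasDerivAt_linearODESol (hA : Continuous A.uncurry) (z : ℂ) (t : ℝ) :
    HasDerivAt (linearODESol A v z) (A z t (linearODESol A v z t)) t := by
  obtain ⟨b, hb, hle⟩ := exists_summable_bound_picardTerm hA v ‖z‖ (|t| + 1)
  have hApply (τ : ℝ) : A z τ (linearODESol A v z τ) = ∑' n, A z τ (picardTerm A v n z τ) :=
    (A z τ).map_tsum (summable_picardTerm hA z τ)
  have hAz : Continuous (A z) := hA.comp (Continuous.prodMk_right z)
  obtain ⟨M, hM⟩ := (isCompact_Icc (a := -(|t| + 1)) (b := |t| + 1)).exists_bound_of_continuousOn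
    hAz.continuousOn
  have ht₀ : 0 < |t| + 1 := by positivity
  rw [hApply, funext (linearODESol_eq_add_tsum hA z)]
  refine (hasDerivAt_tsum_of_isPreconnected (hb.mul_left M) isOpen_Ioo isPreconnected_Ioo
    (fun n τ _ ↦ hasDerivAt_picardTerm_succ hA n z τ) (fun n τ hτ ↦ ?_)
    (y₀ := 0) ⟨neg_lt_zero.2 ht₀, ht₀⟩ ?_ (abs_lt.1 (lt_add_one |t|))).const_add v
  · exact (A z τ).le_of_opNorm_le_of_le (hM τ (Ioo_subset_Icc_self hτ))
      (hle n z (by simp) τ (Ioo_subset_Icc_self hτ))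
  · simp [picardTerm]

lemma differentiable_linearODESol (hA : Continuous A.uncurry)
    (hAd : ∀ t, Differentiable ℂ (A · t)) (t : ℝ) :
    Differentiable ℂ (linearODESol A v · t) := by
  intro z
  obtain ⟨b, hb, hle⟩ := exists_summable_bound_picardTerm hA v (‖z‖ + 1) |t|
  refine (Complex.differentiableOn_tsum_of_summable_norm hb
    (fun n ↦ (differentiable_picardTerm hA hAd n t).differentiableOn) Metric.isOpen_ball
    fun n w hw ↦ hle n w (Metric.ball_subset_closedBall hw) t (abs_le.1 le_rfl)).differentiableAt
    (Metric.isOpen_ball.mem_nhds ?_)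
  simp

lemma continuous_linearODESol (hA : Continuous A.uncurry) :
    Continuous (linearODESol A v).uncurry := by
  refine continuous_iff_continuousAt.2 fun ⟨z, t⟩ ↦ ?_
  obtain ⟨b, hb, hle⟩ := exists_summable_bound_picardTerm hA v (‖z‖ + 1) (|t| + 1)
  have hopen : IsOpen (Metric.ball (0 : ℂ) (‖z‖ + 1) ×ˢ Ioo (-(|t| + 1)) (|t| + 1)) :=
    Metric.isOpen_ball.prod isOpen_Ioo
  refine (continuousOn_tsum (fun n ↦ (continuous_picardTerm hA n).continuousOn) hb
    fun n p hp ↦ hle n p.1 (Metric.ball_subset_closedBall hp.1) p.2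
      (Ioo_subset_Icc_self hp.2)).continuousAt (hopen.mem_nhds ⟨by simp, ?_⟩)
  exact abs_lt.1 (lt_add_one |t|)

end LinearODE

section SineSolution

open scoped ComplexConjugate

/-- The coefficient matrix of `y'' = (q + s) y` written as a first-order system for `(y, y')`. -/
noncomputable def potentialMatrix (q : C(ℝ, ℝ)) (s : ℂ) (x : ℝ) : ℂ × ℂ →L[ℂ] ℂ × ℂ :=
  (ContinuousLinearMap.inl ℂ ℂ ℂ).comp (.snd ℂ ℂ ℂ) +
    ((q x : ℂ) + s) • (ContinuousLinearMap.inr ℂ ℂ ℂ).comp (.fst ℂ ℂ ℂ)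

/-- The sine-type solution `y` of `y'' = (q + s) y`, normalized by `y 0 = 0` and `y' 0 = 1`. -/
noncomputable def sineSol (q : C(ℝ, ℝ)) (s : ℂ) (x : ℝ) : ℂ :=
  (linearODESol (potentialMatrix q) (0, 1) s x).1

/-- The derivative in `x` of `sineSol`. -/
noncomputable def sineSolDeriv (q : C(ℝ, ℝ)) (s : ℂ) (x : ℝ) : ℂ :=
  (linearODESol (potentialMatrix q) (0, 1) s x).2

@[simp] lemma potentialMatrix_apply (q : C(ℝ, ℝ)) (s : ℂ) (x : ℝ) (p : ℂ × ℂ) :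
    potentialMatrix q s x p = (p.2, (q x + s) * p.1) := by
  simp [potentialMatrix]

lemma continuous_potentialMatrix (q : C(ℝ, ℝ)) : Continuous (potentialMatrix q).uncurry := by
  unfold potentialMatrix Function.uncurry
  fun_prop

lemma differentiable_potentialMatrix (q : C(ℝ, ℝ)) (x : ℝ) :
    Differentiable ℂ (potentialMatrix q · x) := by
  unfold potentialMatrix
  fun_prop

lemma hasDerivAt_linearODESol_potentialMatrix (q : C(ℝ, ℝ)) (s : ℂ) (x : ℝ) :
    HasDerivAt (linearODESol (potentialMatrix q) (0, 1) s)
      (sineSolDeriv q s x, (q x + s) * sineSol q s x) x :=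
  (hasDerivAt_linearODESol (continuous_potentialMatrix q) s x).congr_deriv
    (potentialMatrix_apply q s x _)

variable (q : C(ℝ, ℝ)) (s : ℂ)

lemma hasDerivAt_sineSol (x : ℝ) : HasDerivAt (sineSol q s) (sineSolDeriv q s x) x :=
  (hasDerivAt_linearODESol_potentialMatrix q s x).fst

lemma hasDerivAt_sineSolDeriv (x : ℝ) :
    HasDerivAt (sineSolDeriv q s) ((q x + s) * sineSol q s x) x :=
  (hasDerivAt_linearODESol_potentialMatrix q s x).snd

@[simp] lemma sineSol_zero : sineSol q s 0 = 0 :=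
  congrArg Prod.fst (linearODESol_zero (continuous_potentialMatrix q) s)

@[simp] lemma sineSolDeriv_zero : sineSolDeriv q s 0 = 1 :=
  congrArg Prod.snd (linearODESol_zero (continuous_potentialMatrix q) s)

@[fun_prop] lemma continuous_sineSol : Continuous (sineSol q s) :=
  continuous_iff_continuousAt.2 fun x ↦ (hasDerivAt_sineSol q s x).continuousAt

@[fun_prop] lemma continuous_sineSolDeriv : Continuous (sineSolDeriv q s) :=
  continuous_iff_continuousAt.2 fun x ↦ (hasDerivAt_sineSolDeriv q s x).continuousAt

lemma continuous_uncurry_sineSol : Continuous (sineSol q).uncurry :=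
  continuous_fst.comp (continuous_linearODESol (continuous_potentialMatrix q))

@[fun_prop] lemma differentiable_sineSol (x : ℝ) : Differentiable ℂ (sineSol q · x) :=
  (differentiable_linearODESol (continuous_potentialMatrix q)
    (differentiable_potentialMatrix q) x).fst

variable {q s}

lemma eq_const_mul_sineSol {y y' : ℝ → ℂ} (hy : ∀ x, HasDerivAt y (y' x) x)
    (hy' : ∀ x, HasDerivAt y' ((q x + s) * y x) x) (h₀ : y 0 = 0) (x : ℝ) :
    y x = y' 0 * sineSol q s x ∧ y' x = y' 0 * sineSolDeriv q s x := by
  have hsol (x : ℝ) := ((hasDerivAt_sineSol q s x).const_mul (y' 0)).prodMk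
    ((hasDerivAt_sineSolDeriv q s x).const_mul (y' 0))
  have hunique := eq_of_hasDerivAt_linear (B := potentialMatrix q s)
    (Z := fun x ↦ (y' 0 * sineSol q s x, y' 0 * sineSolDeriv q s x))
    ((continuous_potentialMatrix q).comp (Continuous.prodMk_right s))
    (fun x ↦ by simpa using (hy x).prodMk (hy' x))
    (fun x ↦ by simpa [mul_left_comm] using hsol x) (by simp [h₀])
  exact Prod.ext_iff.1 (congrFun hunique x)

variable (q s)

lemma sineSol_conj (x : ℝ) : sineSol q (conj s) x = conj (sineSol q s x) := by
  have hd {f : ℝ → ℂ} {f' : ℂ} {x : ℝ} (h : HasDerivAt f f' x) :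
      HasDerivAt (fun y ↦ conj (f y)) (conj f') x :=
    Complex.conjCLE.toContinuousLinearMap.hasFDerivAt.comp_hasDerivAt x h
  have h := (eq_const_mul_sineSol (q := q) (s := conj s) (fun x ↦ hd (hasDerivAt_sineSol q s x))
    (fun x ↦ by simpa using hd (hasDerivAt_sineSolDeriv q s x)) (by simp) x).1
  simpa using h.symm

variable {s} in
lemma conj_sineSol (hs : s.im = 0) (x : ℝ) : conj (sineSol q s x) = sineSol q s x := by
  rw [← sineSol_conj, Complex.conj_eq_iff_im.2 hs]

lemma sub_mul_integral_sineSol_mul_sineSol (s' : ℂ) (x : ℝ) :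
    (s - s') * ∫ t in (0 : ℝ)..x, sineSol q s t * sineSol q s' t =
      sineSolDeriv q s x * sineSol q s' x - sineSol q s x * sineSolDeriv q s' x := by
  have hderiv (t : ℝ) : HasDerivAt
      (fun t ↦ sineSolDeriv q s t * sineSol q s' t - sineSol q s t * sineSolDeriv q s' t)
      ((s - s') * (sineSol q s t * sineSol q s' t)) t :=
    (((hasDerivAt_sineSolDeriv q s t).mul (hasDerivAt_sineSol q s' t)).sub
      ((hasDerivAt_sineSol q s t).mul (hasDerivAt_sineSolDeriv q s' t))).congr_deriv (by ring)
  rw [← intervalIntegral.integral_const_mul, intervalIntegral.integral_eq_sub_of_hasDerivAt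
    (fun t _ ↦ hderiv t) (Continuous.intervalIntegrable (by fun_prop) 0 x)]
  simp

lemma integral_norm_sq_sineSol_pos {x : ℝ} (hx : 0 < x) :
    0 < ∫ t in (0 : ℝ)..x, ‖sineSol q s t‖ ^ 2 := by
  have hne : ∀ᶠ t in 𝓝[>] (0 : ℝ), sineSol q s t ≠ 0 :=
    ((hasDerivAt_sineSol q s 0).eventually_ne (by simp)).filter_mono
      (nhdsWithin_mono _ fun t ht ↦ ne_of_gt ht)
  obtain ⟨t, ht, htx⟩ := (hne.and (Ioo_mem_nhdsGT hx)).exists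
  exact intervalIntegral.integral_pos hx (by fun_prop) (fun _ _ ↦ by positivity)
    ⟨t, Ioo_subset_Icc_self htx, by positivity⟩

variable {q s}

lemma im_eq_zero_of_sineSol_eq_zero {x : ℝ} (hx : 0 < x) (h : sineSol q s x = 0) : s.im = 0 := by
  have hlagrange := sub_mul_integral_sineSol_mul_sineSol q s (conj s) x
  simp only [sineSol_conj, h, map_zero, mul_zero, zero_mul, sub_zero, Complex.mul_conj,
    Complex.normSq_eq_norm_sq, intervalIntegral.integral_ofReal, mul_eq_zero,
    Complex.ofReal_eq_zero, (integral_norm_sq_sineSol_pos q s hx).ne', or_false] at hlagrange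
  exact Complex.conj_eq_iff_im.1 (sub_eq_zero.1 hlagrange).symm

lemma deriv_sineSol_mul_sineSolDeriv_eq_integral {x : ℝ} (h : sineSol q s x = 0) :
    -sineSolDeriv q s x * deriv (sineSol q · x) s = ∫ t in (0 : ℝ)..x, sineSol q s t ^ 2 := by
  have hcont : Continuous fun z ↦ ∫ t in (0 : ℝ)..x, sineSol q z t * sineSol q s t :=
    intervalIntegral.continuous_parametric_intervalIntegral_of_continuous
      (f := fun z t ↦ sineSol q z t * sineSol q s t)
      ((continuous_uncurry_sineSol q).mul ((continuous_sineSol q s).comp continuous_snd))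
      continuous_const
  have hslope := ((differentiable_sineSol q x s).hasDerivAt.tendsto_slope).const_mul
    (-sineSolDeriv q s x)
  simp only [pow_two]
  refine tendsto_nhds_unique (hslope.congr' ?_) hcont.continuousAt.continuousWithinAt
  filter_upwards [self_mem_nhdsWithin] with z hz
  have hz' : z - s ≠ 0 := sub_ne_zero.2 hz
  have hlagrange := sub_mul_integral_sineSol_mul_sineSol q z s x
  rw [h] at hlagrange
  rw [slope_def_field, h]
  field_simp
  linear_combination -hlagrange

lemma hasDerivAt_sineSol_one_sub (x : ℝ) :
    HasDerivAt (fun x ↦ sineSol q s (1 - x)) (-sineSolDeriv q s (1 - x)) x :=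
  HasDerivAt.comp_const_sub 1 x (hasDerivAt_sineSol q s (1 - x))

lemma hasDerivAt_neg_sineSolDeriv_one_sub (hsym : ∀ x, q (1 - x) = q x) (x : ℝ) :
    HasDerivAt (fun x ↦ -sineSolDeriv q s (1 - x)) ((q x + s) * sineSol q s (1 - x)) x := by
  simpa [hsym] using
    (HasDerivAt.comp_const_sub 1 x (hasDerivAt_sineSolDeriv q s (1 - x))).fun_neg

lemma sineSol_one_sub (hsym : ∀ x, q (1 - x) = q x) (h : sineSol q s 1 = 0) (x : ℝ) :
    sineSol q s (1 - x) = -sineSolDeriv q s 1 * sineSol q s x ∧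
      -sineSolDeriv q s (1 - x) = -sineSolDeriv q s 1 * sineSolDeriv q s x := by
  simpa using eq_const_mul_sineSol hasDerivAt_sineSol_one_sub
    (hasDerivAt_neg_sineSolDeriv_one_sub hsym) (by simpa using h) x

lemma sineSolDeriv_one_mul_self (hsym : ∀ x, q (1 - x) = q x) (h : sineSol q s 1 = 0) :
    sineSolDeriv q s 1 * sineSolDeriv q s 1 = 1 := by
  simpa using ((sineSol_one_sub hsym h 1).2).symm

end SineSolution

section Asymptotics

lemma norm_sin_le_exp_abs_im (z : ℂ) : ‖Complex.sin z‖ ≤ Real.exp |z.im| := by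
  have htri := norm_sub_le (Complex.exp (-z * Complex.I)) (Complex.exp (z * Complex.I))
  simp only [Complex.norm_exp, Complex.mul_I_re, Complex.neg_im, neg_neg] at htri
  rw [Complex.sin, norm_div, norm_mul, Complex.norm_I, mul_one, Complex.norm_ofNat]
  linarith [Real.exp_le_exp.2 (le_abs_self z.im), Real.exp_le_exp.2 (neg_le_abs z.im)]

lemma norm_sin_mul_ofReal_le (k : ℂ) {x : ℝ} (hx : 0 ≤ x) :
    ‖Complex.sin (k * x)‖ ≤ Real.exp (|k.im| * x) := by
  simpa [abs_mul, abs_of_nonneg hx] using norm_sin_le_exp_abs_im (k * x)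

variable (q : C(ℝ, ℝ)) {k : ℂ}

/-- Variation of constants, for `y'' = -k² y` perturbed by `q`. -/
lemma sineSol_sub_sin_div_eq_integral (hk : k ≠ 0) (x : ℝ) :
    sineSol q (-k ^ 2) x - Complex.sin (k * x) / k =
      ∫ t in (0 : ℝ)..x,
        q t * sineSol q (-k ^ 2) t * (Complex.sin (k * (x - t : ℝ)) / k) := by
  have hderiv (t : ℝ) : HasDerivAt
      (fun t : ℝ ↦ sineSolDeriv q (-k ^ 2) t * (Complex.sin (k * (x - t : ℝ)) / k) +
        sineSol q (-k ^ 2) t * Complex.cos (k * (x - t : ℝ)))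
      (q t * sineSol q (-k ^ 2) t * (Complex.sin (k * (x - t : ℝ)) / k)) t := by
    have hphase : HasDerivAt (fun t : ℝ ↦ k * ((x - t : ℝ) : ℂ)) (-k) t := by
      simpa using (((hasDerivAt_id t).const_sub x).ofReal_comp).const_mul k
    have hsin := ((Complex.hasDerivAt_sin _).comp t hphase).div_const k
    have hcos := (Complex.hasDerivAt_cos _).comp t hphase
    refine (((hasDerivAt_sineSolDeriv q _ t).mul hsin).add
      ((hasDerivAt_sineSol q _ t).mul hcos)).congr_deriv ?_
    simp only [Function.comp_apply]
    field_simp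
    ring
  rw [intervalIntegral.integral_eq_sub_of_hasDerivAt (fun t _ ↦ hderiv t)
    (Continuous.intervalIntegrable (by fun_prop) 0 x)]
  simp

variable {q} {Q : ℝ}

lemma norm_sineSol_sub_sin_div_le (hQ : ∀ x ∈ Icc (0 : ℝ) 1, |q x| ≤ Q) (hk : k ≠ 0) {Y : ℝ}
    (hY : ∀ x ∈ Icc (0 : ℝ) 1, ‖sineSol q (-k ^ 2) x‖ ≤ Y * Real.exp (|k.im| * x))
    {x : ℝ} (hx : x ∈ Icc (0 : ℝ) 1) :
    ‖sineSol q (-k ^ 2) x - Complex.sin (k * x) / k‖ ≤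
      Q * Y / ‖k‖ * Real.exp (|k.im| * x) := by
  have hQ₀ : 0 ≤ Q := (abs_nonneg _).trans (hQ x hx)
  have hY₀ : 0 ≤ Y := by simpa using hY 0 (by simp)
  have hintegrand : ∀ t ∈ Ι 0 x,
      ‖(q t : ℂ) * sineSol q (-k ^ 2) t * (Complex.sin (k * (x - t : ℝ)) / k)‖ ≤
        Q * Y / ‖k‖ * Real.exp (|k.im| * x) := by
    intro t ht
    rw [uIoc_of_le hx.1] at ht
    have ht' : t ∈ Icc (0 : ℝ) 1 := ⟨ht.1.le, ht.2.trans hx.2⟩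
    rw [norm_mul, norm_mul, norm_div, Complex.norm_real, Real.norm_eq_abs]
    calc |q t| * ‖sineSol q (-k ^ 2) t‖ * (‖Complex.sin (k * (x - t : ℝ))‖ / ‖k‖)
        ≤ Q * (Y * Real.exp (|k.im| * t)) * (Real.exp (|k.im| * (x - t)) / ‖k‖) := by
          gcongr
          exacts [hQ t ht', hY t ht', norm_sin_mul_ofReal_le k (sub_nonneg.2 ht.2)]
      _ = Q * Y / ‖k‖ * Real.exp (|k.im| * t + |k.im| * (x - t)) := by
          rw [Real.exp_add]
          ring
      _ = Q * Y / ‖k‖ * Real.exp (|k.im| * x) := by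
          rw [← mul_add, add_sub_cancel]
  rw [sineSol_sub_sin_div_eq_integral q hk]
  refine (intervalIntegral.norm_integral_le_of_norm_le_const hintegrand).trans ?_
  rw [sub_zero, abs_of_nonneg hx.1]
  exact mul_le_of_le_one_right (by positivity) hx.2

lemma norm_sineSol_le (hQ : ∀ x ∈ Icc (0 : ℝ) 1, |q x| ≤ Q) (hk : k ≠ 0) (hkQ : 2 * Q ≤ ‖k‖)
    {x : ℝ} (hx : x ∈ Icc (0 : ℝ) 1) :
    ‖sineSol q (-k ^ 2) x‖ ≤ 2 / ‖k‖ * Real.exp (|k.im| * x) := by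
  have hk₀ : 0 < ‖k‖ := norm_pos_iff.2 hk
  obtain ⟨x₀, hx₀, hmax⟩ := isCompact_Icc.exists_isMaxOn (nonempty_Icc.2 (zero_le_one' ℝ))
    (f := fun x ↦ ‖sineSol q (-k ^ 2) x‖ / Real.exp (|k.im| * x))
    (Continuous.continuousOn (by fun_prop (disch := simp)))
  obtain ⟨Y, hY_def⟩ : ∃ Y, Y = ‖sineSol q (-k ^ 2) x₀‖ / Real.exp (|k.im| * x₀) := ⟨_, rfl⟩
  have hY : ∀ x ∈ Icc (0 : ℝ) 1, ‖sineSol q (-k ^ 2) x‖ ≤ Y * Real.exp (|k.im| * x) :=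
    fun x hx ↦ (div_le_iff₀ (Real.exp_pos _)).1 ((hmax hx).trans_eq hY_def.symm)
  have hself : Y ≤ Q * Y / ‖k‖ + 1 / ‖k‖ := by
    have hsin : ‖Complex.sin (k * x₀) / k‖ ≤ 1 / ‖k‖ * Real.exp (|k.im| * x₀) := by
      rw [norm_div, one_div_mul_eq_div]
      gcongr
      exact norm_sin_mul_ofReal_le k hx₀.1
    rw [hY_def, div_le_iff₀ (Real.exp_pos _), ← hY_def, add_mul]
    exact (norm_le_norm_sub_add _ _).trans
      (add_le_add (norm_sineSol_sub_sin_div_le hQ hk hY hx₀) hsin)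
  have hY₀ : 0 ≤ Y := hY_def ▸ by positivity
  have hY_le : Y ≤ 2 / ‖k‖ := by
    rw [le_div_iff₀ hk₀]
    rw [← add_div, le_div_iff₀ hk₀] at hself
    nlinarith
  exact (hY x hx).trans (by gcongr)

lemma norm_sineSol_one_sub_sin_div_le (hQ : ∀ x ∈ Icc (0 : ℝ) 1, |q x| ≤ Q) (hk : k ≠ 0)
    (hkQ : 2 * Q ≤ ‖k‖) :
    ‖sineSol q (-k ^ 2) 1 - Complex.sin k / k‖ ≤ Q * (2 / ‖k‖) / ‖k‖ * Real.exp |k.im| := by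
  simpa using norm_sineSol_sub_sin_div_le hQ hk (fun x hx ↦ norm_sineSol_le hQ hk hkQ hx)
    (right_mem_Icc.2 zero_le_one)

end Asymptotics

section EntireFunctions

lemma exists_differentiable_eq_mul {N D : ℂ → ℂ} (hN : Differentiable ℂ N)
    (hD : Differentiable ℂ D) (h : ∀ z, D z = 0 → N z = 0 ∧ deriv D z ≠ 0) :
    ∃ H : ℂ → ℂ, Differentiable ℂ H ∧ ∀ z, N z = H z * D z := by
  classical
  have hdslope {f : ℂ → ℂ} (hf : Differentiable ℂ f) (z : ℂ) :
      DifferentiableAt ℂ (dslope f z) z :=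
    ((Complex.differentiableOn_dslope univ_mem).2 hf.differentiableOn).differentiableAt univ_mem
  have hfactor {f : ℂ → ℂ} {z₀ : ℂ} (h₀ : f z₀ = 0) (z : ℂ) :
      f z = (z - z₀) * dslope f z₀ z := by
    simpa [h₀] using (sub_smul_dslope f z₀ z).symm
  refine ⟨fun z ↦ if D z = 0 then deriv N z / deriv D z else N z / D z, fun z₀ ↦ ?_, fun z ↦ ?_⟩
  · by_cases hz₀ : D z₀ = 0
    · obtain ⟨hN₀, hD₀⟩ := h z₀ hz₀
      have hne : dslope D z₀ z₀ ≠ 0 := by rwa [dslope_same]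
      refine ((hdslope hN z₀).div (hdslope hD z₀) hne).congr_of_eventuallyEq ?_
      filter_upwards [(hdslope hD z₀).continuousAt.eventually_ne hne] with z hz
      rcases eq_or_ne z z₀ with rfl | hzz₀
      · simp [hz₀]
      · have hsub : z - z₀ ≠ 0 := sub_ne_zero.2 hzz₀
        rw [Pi.div_apply, if_neg (by rw [hfactor hz₀]; exact mul_ne_zero hsub hz),
          hfactor hz₀, hfactor hN₀, mul_div_mul_left _ _ hsub]
    · refine ((hN z₀).div (hD z₀) hz₀).congr_of_eventuallyEq ?_
      filter_upwards [(hD z₀).continuousAt.eventually_ne hz₀] with z hz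
      rw [if_neg hz, Pi.div_apply]
  · by_cases hz : D z = 0
    · simp [hz, (h z hz).1]
    · simp [hz]

lemma abs_im_or_abs_re_eq_of_mem_frontier_square {L : ℝ} (hL : 0 < L) {k : ℂ}
    (hk : k ∈ frontier (Ioo (-L) L ×ℂ Ioo (-L) L)) : |k.im| = L ∨ |k.re| = L := by
  have hLL : -L < L := by linarith
  rw [Complex.frontier_reProdIm, frontier_Ioo hLL] at hk
  simp only [abs_eq hL.le]
  exact hk.imp (fun h ↦ h.2.symm) (fun h ↦ h.1.symm)

lemma eq_zero_of_norm_le_on_squares {g : ℂ → ℂ} (hg : Differentiable ℂ g) {L ε : ℕ → ℝ}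
    (hL : Tendsto L atTop atTop) (hε : Tendsto ε atTop (𝓝 0))
    (h : ∀ᶠ n in atTop, ∀ k : ℂ, |k.im| = L n ∨ |k.re| = L n → ‖g k‖ ≤ ε n) (k : ℂ) :
    g k = 0 := by
  refine norm_le_zero_iff.1 (ge_of_tendsto hε ?_)
  filter_upwards [h, hL.eventually_gt_atTop ‖k‖] with n hn hkn
  have hk : k ∈ Ioo (-L n) (L n) ×ℂ Ioo (-L n) (L n) :=
    ⟨abs_lt.1 ((Complex.abs_re_le_norm k).trans_lt hkn),
      abs_lt.1 ((Complex.abs_im_le_norm k).trans_lt hkn)⟩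
  exact Complex.norm_le_of_forall_mem_frontier_norm_le
    ((Metric.isBounded_Ioo _ _).reProdIm (Metric.isBounded_Ioo _ _)) hg.diffContOnCl
    (fun z hz ↦ hn z (abs_im_or_abs_re_eq_of_mem_frontier_square
      ((norm_nonneg k).trans_lt hkn) hz)) (subset_closure hk)

lemma exp_abs_im_div_four_le_norm_sin_of_one_le_abs_im {k : ℂ} (hk : 1 ≤ |k.im|) :
    Real.exp |k.im| / 4 ≤ ‖Complex.sin k‖ := by
  have htri := abs_norm_sub_norm_le (Complex.exp (-k * Complex.I)) (Complex.exp (k * Complex.I))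
  simp only [Complex.norm_exp, Complex.mul_I_re, Complex.neg_im, neg_neg] at htri
  have hexp : Real.exp |k.im| - Real.exp (-|k.im|) ≤ |Real.exp k.im - Real.exp (-k.im)| := by
    rcases abs_choice k.im with h | h <;> rw [h]
    · exact le_abs_self _
    · rw [neg_neg, abs_sub_comm]
      exact le_abs_self _
  have hlarge : 2 ≤ Real.exp |k.im| := by linarith [Real.add_one_le_exp |k.im|]
  have hsmall : Real.exp (-|k.im|) ≤ 1 := Real.exp_le_one_iff.2 (by linarith)
  rw [Complex.sin, norm_div, norm_mul, Complex.norm_I, mul_one, Complex.norm_ofNat]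
  linarith

lemma exp_abs_im_div_four_le_norm_sin_of_cos_re_eq_zero {k : ℂ} (hk : Real.cos k.re = 0) :
    Real.exp |k.im| / 4 ≤ ‖Complex.sin k‖ := by
  have hsin : |Real.sin k.re| = 1 := by
    rw [Real.abs_sin_eq_sqrt_one_sub_cos_sq, hk]
    simp
  rw [Complex.sin_eq, ← Complex.ofReal_cos, ← Complex.ofReal_sin, hk, ← Complex.ofReal_cosh]
  simp only [Complex.ofReal_zero, zero_mul, add_zero, norm_mul, Complex.norm_real,
    Real.norm_eq_abs, hsin, one_mul, abs_of_pos (Real.cosh_pos _)]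
  rw [← Real.cosh_abs, Real.cosh_eq]
  linarith [Real.exp_pos |k.im|, Real.exp_pos (-|k.im|)]

end EntireFunctions

section SymmetricPotentials

variable {q q₁ q₂ : C(ℝ, ℝ)}

lemma exists_pos_neg_sineSolDeriv_mul_deriv_sineSol_eq {s : ℂ} {x : ℝ} (hx : 0 < x)
    (h : sineSol q s x = 0) :
    ∃ r : ℝ, 0 < r ∧ -sineSolDeriv q s x * deriv (sineSol q · x) s = r := by
  refine ⟨_, integral_norm_sq_sineSol_pos q s hx, ?_⟩
  rw [deriv_sineSol_mul_sineSolDeriv_eq_integral h, ← intervalIntegral.integral_ofReal]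
  refine intervalIntegral.integral_congr fun t _ ↦ ?_
  rw [Complex.ofReal_pow, ← Complex.mul_conj',
    conj_sineSol q (im_eq_zero_of_sineSol_eq_zero hx h), pow_two]

/-- At a common Dirichlet eigenvalue of two symmetric potentials both end slopes are `1` or `-1`,
and their sign is that of the derivative of the shared characteristic function. -/
lemma sineSolDeriv_one_eq (hsym₁ : ∀ x, q₁ (1 - x) = q₁ x) (hsym₂ : ∀ x, q₂ (1 - x) = q₂ x)
    (heq : ∀ s, sineSol q₁ s 1 = sineSol q₂ s 1) {s : ℂ} (h : sineSol q₁ s 1 = 0) :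
    sineSolDeriv q₁ s 1 = sineSolDeriv q₂ s 1 := by
  have h₂ : sineSol q₂ s 1 = 0 := heq s ▸ h
  obtain ⟨r₁, hr₁, e₁⟩ := exists_pos_neg_sineSolDeriv_mul_deriv_sineSol_eq one_pos h
  obtain ⟨r₂, hr₂, e₂⟩ := exists_pos_neg_sineSolDeriv_mul_deriv_sineSol_eq one_pos h₂
  rw [← funext heq] at e₂
  have hsign : sineSolDeriv q₁ s 1 ≠ -sineSolDeriv q₂ s 1 := by
    intro hneg
    have hsum : ((r₁ + r₂ : ℝ) : ℂ) = 0 := by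
      rw [Complex.ofReal_add, ← e₁, ← e₂, hneg]
      ring
    linarith [Complex.ofReal_eq_zero.1 hsum]
  exact (mul_self_eq_mul_self_iff.1 ((sineSolDeriv_one_mul_self hsym₁ h).trans
    (sineSolDeriv_one_mul_self hsym₂ h₂).symm)).resolve_right hsign

variable (q₁ q₂) in
/-- The antisymmetrized product of the two sine-type solutions with their reflections at the
midpoint of `[0, 1]`, as a function of the spectral parameter. -/
noncomputable def reflectionDefect (x : ℝ) (s : ℂ) : ℂ :=
  sineSol q₁ s x * sineSol q₂ s (1 - x) - sineSol q₂ s x * sineSol q₁ s (1 - x)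

lemma differentiable_reflectionDefect (x : ℝ) : Differentiable ℂ (reflectionDefect q₁ q₂ x) := by
  unfold reflectionDefect
  fun_prop

lemma reflectionDefect_eq_zero_of_sineSol_eq_zero (hsym₁ : ∀ x, q₁ (1 - x) = q₁ x)
    (hsym₂ : ∀ x, q₂ (1 - x) = q₂ x) (heq : ∀ s, sineSol q₁ s 1 = sineSol q₂ s 1) {s : ℂ}
    (h : sineSol q₁ s 1 = 0) (x : ℝ) : reflectionDefect q₁ q₂ x s = 0 := by
  rw [reflectionDefect, (sineSol_one_sub hsym₁ h x).1, (sineSol_one_sub hsym₂ (heq s ▸ h) x).1,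
    sineSolDeriv_one_eq hsym₁ hsym₂ heq h]
  ring

variable {Q : ℝ} {k : ℂ}

lemma norm_reflectionDefect_le (hQ₁ : ∀ x ∈ Icc (0 : ℝ) 1, |q₁ x| ≤ Q)
    (hQ₂ : ∀ x ∈ Icc (0 : ℝ) 1, |q₂ x| ≤ Q) (hk : k ≠ 0) (hkQ : 2 * Q ≤ ‖k‖) {x : ℝ}
    (hx : x ∈ Icc (0 : ℝ) 1) :
    ‖reflectionDefect q₁ q₂ x (-k ^ 2)‖ ≤ 8 / ‖k‖ ^ 2 * Real.exp |k.im| := by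
  have hx' : 1 - x ∈ Icc (0 : ℝ) 1 := ⟨by linarith [hx.2], by linarith [hx.1]⟩
  have hmul {p p' : C(ℝ, ℝ)} (hp : ∀ x ∈ Icc (0 : ℝ) 1, |p x| ≤ Q)
      (hp' : ∀ x ∈ Icc (0 : ℝ) 1, |p' x| ≤ Q) :
      ‖sineSol p (-k ^ 2) x * sineSol p' (-k ^ 2) (1 - x)‖ ≤
        4 / ‖k‖ ^ 2 * Real.exp |k.im| := by
    rw [norm_mul]
    calc ‖sineSol p (-k ^ 2) x‖ * ‖sineSol p' (-k ^ 2) (1 - x)‖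
        ≤ (2 / ‖k‖ * Real.exp (|k.im| * x)) * (2 / ‖k‖ * Real.exp (|k.im| * (1 - x))) := by
          gcongr
          exacts [norm_sineSol_le hp hk hkQ hx, norm_sineSol_le hp' hk hkQ hx']
      _ = 4 / ‖k‖ ^ 2 * Real.exp (|k.im| * x + |k.im| * (1 - x)) := by
          rw [Real.exp_add]
          ring
      _ = 4 / ‖k‖ ^ 2 * Real.exp |k.im| := by
          rw [← mul_add, add_sub_cancel, mul_one]
  calc ‖reflectionDefect q₁ q₂ x (-k ^ 2)‖
      ≤ 4 / ‖k‖ ^ 2 * Real.exp |k.im| + 4 / ‖k‖ ^ 2 * Real.exp |k.im| :=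
        (norm_sub_le _ _).trans (add_le_add (hmul hQ₁ hQ₂) (hmul hQ₂ hQ₁))
    _ = 8 / ‖k‖ ^ 2 * Real.exp |k.im| := by ring

lemma exp_abs_im_div_le_norm_sineSol_one (hQ : ∀ x ∈ Icc (0 : ℝ) 1, |q x| ≤ Q) (hk : k ≠ 0)
    (hkQ : 16 * Q ≤ ‖k‖) (hsin : Real.exp |k.im| / 4 ≤ ‖Complex.sin k‖) :
    Real.exp |k.im| / (8 * ‖k‖) ≤ ‖sineSol q (-k ^ 2) 1‖ := by
  have hk₀ : 0 < ‖k‖ := norm_pos_iff.2 hk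
  have hQ₀ : 0 ≤ Q := (abs_nonneg _).trans (hQ 0 (by simp))
  have hmain : Real.exp |k.im| / (4 * ‖k‖) ≤ ‖Complex.sin k / k‖ := by
    rw [norm_div, ← div_div]
    gcongr
  have herror : ‖sineSol q (-k ^ 2) 1 - Complex.sin k / k‖ ≤ Real.exp |k.im| / (8 * ‖k‖) := by
    calc ‖sineSol q (-k ^ 2) 1 - Complex.sin k / k‖
        ≤ Q * (2 / ‖k‖) / ‖k‖ * Real.exp |k.im| :=
          norm_sineSol_one_sub_sin_div_le hQ hk (by linarith [hQ₀])
      _ = 16 * Q / ‖k‖ * (Real.exp |k.im| / (8 * ‖k‖)) := by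
          field_simp
          ring
      _ ≤ Real.exp |k.im| / (8 * ‖k‖) :=
          mul_le_of_le_one_left (by positivity) ((div_le_one hk₀).2 hkQ)
  have hhalf : Real.exp |k.im| / (4 * ‖k‖) =
      Real.exp |k.im| / (8 * ‖k‖) + Real.exp |k.im| / (8 * ‖k‖) := by
    field_simp
    norm_num
  have htri := norm_sub_norm_le (Complex.sin k / k) (sineSol q (-k ^ 2) 1)
  rw [norm_sub_rev] at htri
  linarith

lemma norm_le_of_reflectionDefect_eq_mul (hQ₁ : ∀ x ∈ Icc (0 : ℝ) 1, |q₁ x| ≤ Q)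
    (hQ₂ : ∀ x ∈ Icc (0 : ℝ) 1, |q₂ x| ≤ Q) (hk : k ≠ 0) (hkQ : 16 * Q ≤ ‖k‖)
    (hsin : Real.exp |k.im| / 4 ≤ ‖Complex.sin k‖) {x : ℝ} (hx : x ∈ Icc (0 : ℝ) 1) {h : ℂ}
    (heq : reflectionDefect q₁ q₂ x (-k ^ 2) = h * sineSol q₁ (-k ^ 2) 1) :
    ‖h‖ ≤ 64 / ‖k‖ := by
  have hk₀ : 0 < ‖k‖ := norm_pos_iff.2 hk
  have hQ₀ : 0 ≤ Q := (abs_nonneg _).trans (hQ₁ 0 (by simp))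
  have hexp : 0 < Real.exp |k.im| / (8 * ‖k‖) := by positivity
  refine le_of_mul_le_mul_right ?_ hexp
  calc ‖h‖ * (Real.exp |k.im| / (8 * ‖k‖))
      ≤ ‖h‖ * ‖sineSol q₁ (-k ^ 2) 1‖ := by
        gcongr
        exact exp_abs_im_div_le_norm_sineSol_one hQ₁ hk hkQ hsin
    _ = ‖reflectionDefect q₁ q₂ x (-k ^ 2)‖ := by rw [heq, norm_mul]
    _ ≤ 8 / ‖k‖ ^ 2 * Real.exp |k.im| :=
        norm_reflectionDefect_le hQ₁ hQ₂ hk (by linarith [hQ₀]) hx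
    _ = 64 / ‖k‖ * (Real.exp |k.im| / (8 * ‖k‖)) := by
        field_simp
        norm_num

lemma exists_abs_le_on_unitInterval (q₁ q₂ : C(ℝ, ℝ)) :
    ∃ Q, (∀ x ∈ Icc (0 : ℝ) 1, |q₁ x| ≤ Q) ∧ ∀ x ∈ Icc (0 : ℝ) 1, |q₂ x| ≤ Q := by
  obtain ⟨Q, hQ⟩ := isCompact_Icc.exists_bound_of_continuousOn (s := Icc (0 : ℝ) 1)
    (f := fun x ↦ (q₁ x, q₂ x)) (by fun_prop)
  simp only [Prod.norm_mk, sup_le_iff, Real.norm_eq_abs] at hQ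
  exact ⟨Q, fun x hx ↦ (hQ x hx).1, fun x hx ↦ (hQ x hx).2⟩

lemma eq_zero_of_reflectionDefect_eq_mul {x : ℝ} (hx : x ∈ Icc (0 : ℝ) 1) {H : ℂ → ℂ}
    (hH : Differentiable ℂ H)
    (heq : ∀ s, reflectionDefect q₁ q₂ x s = H s * sineSol q₁ s 1) (s : ℂ) : H s = 0 := by
  obtain ⟨Q, hQ₁, hQ₂⟩ := exists_abs_le_on_unitInterval q₁ q₂
  obtain ⟨k, hk⟩ := IsAlgClosed.exists_pow_nat_eq (-s) (n := 2) two_pos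
  set L : ℕ → ℝ := fun n ↦ n * Real.pi + Real.pi / 2 with hL_def
  have hL : Tendsto L atTop atTop :=
    tendsto_atTop_add_const_right _ _
      (tendsto_natCast_atTop_atTop.atTop_mul_const Real.pi_pos)
  rw [← neg_neg s, ← hk]
  refine eq_zero_of_norm_le_on_squares (g := fun k ↦ H (-k ^ 2)) (hH.comp (by fun_prop)) hL
    (ε := fun n ↦ 64 / L n) (tendsto_const_nhds.div_atTop hL) ?_ k
  filter_upwards [hL.eventually_ge_atTop 1, hL.eventually_ge_atTop (16 * Q)] with n hn hnQ k hk
  have hLk : L n ≤ ‖k‖ := by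
    rcases hk with h | h <;> rw [← h]
    exacts [Complex.abs_im_le_norm k, Complex.abs_re_le_norm k]
  have hk₀ : k ≠ 0 := norm_pos_iff.1 (by linarith)
  have hsin : Real.exp |k.im| / 4 ≤ ‖Complex.sin k‖ := by
    rcases hk with h | h
    · exact exp_abs_im_div_four_le_norm_sin_of_one_le_abs_im (h ▸ hn)
    · refine exp_abs_im_div_four_le_norm_sin_of_cos_re_eq_zero ?_
      rw [← Real.cos_abs, h]
      simp [hL_def, Real.cos_add]
  calc ‖H (-k ^ 2)‖
      ≤ 64 / ‖k‖ :=
        norm_le_of_reflectionDefect_eq_mul hQ₁ hQ₂ hk₀ (hnQ.trans hLk) hsin hx (heq _)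
    _ ≤ 64 / L n := by gcongr

/-- The quotient of the defect by the characteristic function is entire and tends to zero, so
it vanishes identically. -/
lemma reflectionDefect_eq_zero (hsym₁ : ∀ x, q₁ (1 - x) = q₁ x)
    (hsym₂ : ∀ x, q₂ (1 - x) = q₂ x) (heq : ∀ s, sineSol q₁ s 1 = sineSol q₂ s 1) {x : ℝ}
    (hx : x ∈ Icc (0 : ℝ) 1) (s : ℂ) : reflectionDefect q₁ q₂ x s = 0 := by
  have hsimple (s : ℂ) (h : sineSol q₁ s 1 = 0) : deriv (sineSol q₁ · 1) s ≠ 0 := by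
    intro hderiv
    obtain ⟨r, hr, e⟩ := exists_pos_neg_sineSolDeriv_mul_deriv_sineSol_eq one_pos h
    rw [hderiv, mul_zero] at e
    exact hr.ne (Complex.ofReal_eq_zero.1 e.symm).symm
  obtain ⟨H, hH, hmul⟩ := exists_differentiable_eq_mul
    (differentiable_reflectionDefect (q₁ := q₁) (q₂ := q₂) x) (differentiable_sineSol q₁ 1)
    fun s h ↦ ⟨reflectionDefect_eq_zero_of_sineSol_eq_zero hsym₁ hsym₂ heq h x, hsimple s h⟩
  rw [hmul, eq_zero_of_reflectionDefect_eq_mul hx hH hmul, zero_mul]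

lemma wronskian_sineSol_one_sub (hsym : ∀ x, q (1 - x) = q x) (s : ℂ) (x : ℝ) :
    sineSolDeriv q s x * sineSol q s (1 - x) + sineSol q s x * sineSolDeriv q s (1 - x) =
      sineSol q s 1 := by
  have hderiv (x : ℝ) : HasDerivAt (fun x ↦ sineSolDeriv q s x * sineSol q s (1 - x) -
      sineSol q s x * -sineSolDeriv q s (1 - x)) 0 x :=
    (((hasDerivAt_sineSolDeriv q s x).mul (hasDerivAt_sineSol_one_sub x)).sub
      ((hasDerivAt_sineSol q s x).mul
        (hasDerivAt_neg_sineSolDeriv_one_sub hsym x))).congr_deriv (by ring)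
  simpa using is_const_of_deriv_eq_zero (fun x ↦ (hderiv x).differentiableAt)
    (fun x ↦ (hderiv x).deriv) x 0

lemma eqOn_of_hasDerivAt_of_eqOn {f g f' g' : ℝ → ℂ} {S : Set ℝ} (hS : IsOpen S)
    (h : EqOn f g S) (hf : ∀ x, HasDerivAt f (f' x) x) (hg : ∀ x, HasDerivAt g (g' x) x) :
    EqOn f' g' S := fun x hx ↦
  (hf x).unique ((hg x).congr_of_eventuallyEq (h.eventuallyEq_of_mem (hS.mem_nhds hx)))

lemma sineSol_sq_eq_of_sineSol_one_eq (hsym₁ : ∀ x, q₁ (1 - x) = q₁ x)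
    (hsym₂ : ∀ x, q₂ (1 - x) = q₂ x) (heq : ∀ s, sineSol q₁ s 1 = sineSol q₂ s 1) {s : ℂ}
    (hs : sineSol q₁ s 1 ≠ 0) {x : ℝ} (hx : x ∈ Ioo (0 : ℝ) 1) :
    sineSol q₁ s x ^ 2 = sineSol q₂ s x ^ 2 := by
  have hzero : EqOn (fun x ↦ reflectionDefect q₁ q₂ x s) (fun _ ↦ 0) (Ioo 0 1) :=
    fun x hx ↦ reflectionDefect_eq_zero hsym₁ hsym₂ heq (Ioo_subset_Icc_self hx) s
  have hderiv := eqOn_of_hasDerivAt_of_eqOn isOpen_Ioo hzero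
    (fun x ↦ ((hasDerivAt_sineSol q₁ s x).mul (hasDerivAt_sineSol_one_sub x)).sub
      ((hasDerivAt_sineSol q₂ s x).mul (hasDerivAt_sineSol_one_sub x)))
    (fun x ↦ hasDerivAt_const x 0) hx
  have hdefect := hzero hx
  have hw₁ := wronskian_sineSol_one_sub hsym₁ s x
  have hw₂ := wronskian_sineSol_one_sub hsym₂ s x
  simp only [reflectionDefect] at hdefect hderiv
  rw [← heq] at hw₂
  refine mul_left_cancel₀ hs ?_
  linear_combination (-sineSol q₁ s x ^ 2) * hw₂ + sineSol q₂ s x ^ 2 * hw₁ -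
    sineSol q₁ s x * sineSol q₂ s x * hderiv +
    (sineSolDeriv q₁ s x * sineSol q₂ s x + sineSol q₁ s x * sineSolDeriv q₂ s x) * hdefect

lemma eqOn_of_sineSol_eqOn_const_mul {s : ℂ} (c : ℂ) {S : Set ℝ} (hS : IsOpen S)
    (h : EqOn (sineSol q₁ s) (fun x ↦ c * sineSol q₂ s x) S)
    (hne : ∀ x ∈ S, sineSol q₁ s x ≠ 0) : EqOn q₁ q₂ S := by
  have hderiv := eqOn_of_hasDerivAt_of_eqOn hS h (hasDerivAt_sineSol q₁ s)
    fun x ↦ (hasDerivAt_sineSol q₂ s x).const_mul c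
  have hderiv₂ := eqOn_of_hasDerivAt_of_eqOn hS hderiv (hasDerivAt_sineSolDeriv q₁ s)
    fun x ↦ (hasDerivAt_sineSolDeriv q₂ s x).const_mul c
  intro x hx
  have hq : (q₁ x : ℂ) = q₂ x := by
    refine mul_right_cancel₀ (hne x hx) ?_
    linear_combination hderiv₂ hx - (q₂ x + s) * h hx
  exact_mod_cast hq

theorem eqOn_of_sineSol_one_eq (hsym₁ : ∀ x, q₁ (1 - x) = q₁ x)
    (hsym₂ : ∀ x, q₂ (1 - x) = q₂ x) (heq : ∀ s, sineSol q₁ s 1 = sineSol q₂ s 1) :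
    EqOn q₁ q₂ (Icc 0 1) := by
  have hne (q : C(ℝ, ℝ)) {x : ℝ} (hx : 0 < x) : sineSol q Complex.I x ≠ 0 := fun h ↦ by
    simpa using im_eq_zero_of_sineSol_eq_zero hx h
  have hsq : EqOn (sineSol q₁ Complex.I ^ 2) (sineSol q₂ Complex.I ^ 2) (Ioo 0 1) :=
    fun x hx ↦ sineSol_sq_eq_of_sineSol_one_eq hsym₁ hsym₂ heq (hne q₁ one_pos) hx
  have hmul : ∃ c : ℂ, EqOn (sineSol q₁ Complex.I) (fun x ↦ c * sineSol q₂ Complex.I x)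
      (Ioo 0 1) := by
    rcases isPreconnected_Ioo.eq_or_eq_neg_of_sq_eq (continuous_sineSol q₁ _).continuousOn
      (continuous_sineSol q₂ _).continuousOn hsq fun hx ↦ hne q₂ hx.1 with h | h
    · exact ⟨1, fun x hx ↦ by simpa using h hx⟩
    · exact ⟨-1, fun x hx ↦ by simpa using h hx⟩
  obtain ⟨c, hc⟩ := hmul
  have hIoo := eqOn_of_sineSol_eqOn_const_mul c isOpen_Ioo hc fun x hx ↦ hne q₁ hx.1
  simpa only [closure_Ioo zero_ne_one] using hIoo.closure q₁.continuous q₂.continuous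

end SymmetricPotentials

section SymmetricExtension

/-- The extension of a continuous potential on `[0,1]` to the line by its boundary values; it lets
the Sturm–Liouville solutions be defined globally. -/
noncomputable def extendUnitInterval (q : ℝ → ℝ) (hq : ContinuousOn q (Icc 0 1)) : C(ℝ, ℝ) :=
  ContinuousMap.IccExtend zero_le_one ⟨(Icc 0 1).domRestrict q, hq.domRestrict⟩

variable {q : ℝ → ℝ}

theorem eqOn_extendUnitInterval (hq : ContinuousOn q (Icc 0 1)) :
    EqOn (extendUnitInterval q hq) q (Icc 0 1) :=
  fun _ hx ↦ IccExtend_of_mem zero_le_one ((Icc 0 1).domRestrict q) hx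

theorem apply_one_sub_of_symm_half (hsym : ∀ x ∈ Icc (0 : ℝ) (1 / 2), q (1 / 2 + x) = q (1 / 2 - x))
    {x : ℝ} (hx : x ∈ Icc (0 : ℝ) 1) : q (1 - x) = q x := by
  rcases le_total x (1 / 2) with h | h
  · convert hsym (1 / 2 - x) ⟨by linarith, by linarith [hx.1]⟩ using 2 <;> ring
  · convert (hsym (x - 1 / 2) ⟨by linarith, by linarith [hx.2]⟩).symm using 2 <;> ring

theorem extendUnitInterval_one_sub (hq : ContinuousOn q (Icc 0 1))
    (hsym : ∀ x ∈ Icc (0 : ℝ) (1 / 2), q (1 / 2 + x) = q (1 / 2 - x)) (x : ℝ) :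
    extendUnitInterval q hq (1 - x) = extendUnitInterval q hq x := by
  have hproj := congrArg Subtype.val (unitInterval.symm_projIcc x)
  change q (projIcc 0 1 zero_le_one (1 - x)) = q (projIcc 0 1 zero_le_one x)
  rw [← hproj, unitInterval.coe_symm_eq]
  exact apply_one_sub_of_symm_half hsym (projIcc 0 1 zero_le_one x).2

end SymmetricExtension

section MaximumPrinciple

theorem second_deriv_nonpos_of_isLocalMax {f f' : ℝ → ℝ} {f'' x : ℝ} (hmax : IsLocalMax f x)
    (hf : ∀ᶠ y in 𝓝 x, HasDerivAt f (f' y) y) (hf' : HasDerivAt f' f'' x) : f'' ≤ 0 := by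
  have hderiv : deriv f =ᶠ[𝓝 x] f' := hf.mono fun y hy ↦ hy.deriv
  have hderiv₂ : deriv (deriv f) x = f'' := by rw [hderiv.deriv_eq, hf'.deriv]
  by_contra! hpos
  have hmin : IsLocalMin f x := isLocalMin_of_deriv_deriv_pos (hderiv₂ ▸ hpos) hmax.deriv_eq_zero
    hf.self_of_nhds.continuousAt
  have hconst : f =ᶠ[𝓝 x] fun _ ↦ f x := by
    filter_upwards [hmax, hmin] with y hle hge using le_antisymm hle hge
  have hzero : deriv (deriv f) x = 0 := by simp [hconst.deriv.deriv_eq]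
  exact hpos.ne' (hderiv₂.symm.trans hzero)

theorem deriv_nonneg_of_eventually_le_left {f : ℝ → ℝ} {f' x : ℝ}
    (hmax : ∀ᶠ y in 𝓝[<] x, f y ≤ f x) (hf : HasDerivWithinAt f f' (Iio x) x) : 0 ≤ f' := by
  rw [hasDerivWithinAt_iff_tendsto_slope' self_notMem_Iio] at hf
  refine ge_of_tendsto hf ?_
  filter_upwards [hmax, self_mem_nhdsWithin] with y hle hlt
  rw [slope_def_field]
  exact div_nonneg_of_nonpos (sub_nonpos.2 hle) (sub_nonpos.2 (le_of_lt hlt))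

theorem le_of_lt_second_deriv_of_le_on_parabolic_boundary {v vx vxx vt : ℝ → ℝ → ℝ}
    {a b t₀ t₁ B : ℝ} (hv : ContinuousOn (fun p : ℝ × ℝ ↦ v p.1 p.2) (Icc a b ×ˢ Icc t₀ t₁))
    (hx : ∀ t ∈ Ioc t₀ t₁, ∀ x ∈ Ioo a b, HasDerivAt (fun y ↦ v y t) (vx x t) x)
    (hxx : ∀ t ∈ Ioc t₀ t₁, ∀ x ∈ Ioo a b, HasDerivAt (fun y ↦ vx y t) (vxx x t) x)
    (ht : ∀ t ∈ Ioc t₀ t₁, ∀ x ∈ Ioo a b, HasDerivWithinAt (fun r ↦ v x r) (vt x t) (Iio t) t)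
    (hlt : ∀ t ∈ Ioc t₀ t₁, ∀ x ∈ Ioo a b, vt x t < vxx x t)
    (hinit : ∀ x ∈ Icc a b, v x t₀ ≤ B)
    (hleft : ∀ t ∈ Icc t₀ t₁, v a t ≤ B) (hright : ∀ t ∈ Icc t₀ t₁, v b t ≤ B)
    {x t : ℝ} (hxmem : x ∈ Icc a b) (htmem : t ∈ Icc t₀ t₁) : v x t ≤ B := by
  obtain ⟨⟨x', t'⟩, ⟨hx', ht'⟩, hmax⟩ := (isCompact_Icc.prod isCompact_Icc).exists_isMaxOn
    ⟨(x, t), hxmem, htmem⟩ hv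
  have hmax' : ∀ y ∈ Icc a b, ∀ r ∈ Icc t₀ t₁, v y r ≤ v x' t' := fun y hy r hr ↦
    hmax (mk_mem_prod hy hr)
  refine (hmax' x hxmem t htmem).trans ?_
  rcases eq_endpoints_or_mem_Ioo_of_mem_Icc hx' with rfl | rfl | hx'
  · exact hleft t' ht'
  · exact hright t' ht'
  rcases ht'.1.eq_or_lt with rfl | hpos
  · exact hinit x' (Ioo_subset_Icc_self hx')
  have htime : 0 ≤ vt x' t' := by
    refine deriv_nonneg_of_eventually_le_left ?_ (ht t' ⟨hpos, ht'.2⟩ x' hx')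
    filter_upwards [Ioo_mem_nhdsLT hpos] with r hr
    exact hmax' x' (Ioo_subset_Icc_self hx') r ⟨hr.1.le, hr.2.le.trans ht'.2⟩
  have hspace : vxx x' t' ≤ 0 := by
    refine second_deriv_nonpos_of_isLocalMax (f := fun y ↦ v y t') ?_ ?_
      (hxx t' ⟨hpos, ht'.2⟩ x' hx')
    · filter_upwards [Icc_mem_nhds hx'.1 hx'.2] with y hy using hmax' y hy t' ht'
    · filter_upwards [Ioo_mem_nhds hx'.1 hx'.2] with y hy using hx t' ⟨hpos, ht'.2⟩ y hy
  exact absurd (hlt t' ⟨hpos, ht'.2⟩ x' hx') (hspace.trans htime).not_gt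

end MaximumPrinciple

section LaplaceTransform

variable {E : Type*} [NormedAddCommGroup E] [NormedSpace ℂ E] {f : ℝ → E} {σ : ℝ} {z : ℂ}

/-- The one-sided Laplace transform `∫₀^∞ e^{-zt} f(t) dt`; the values of `f` on `(-∞, 0]` are
irrelevant. -/
noncomputable def laplaceTransform (f : ℝ → E) (z : ℂ) : E :=
  ∫ t in Ioi (0 : ℝ), Complex.exp (-(z * t)) • f t

theorem laplaceTransform_congr {g : ℝ → E} (h : EqOn f g (Ioi 0)) :
    laplaceTransform f = laplaceTransform g :=
  funext fun z ↦ setIntegral_congr_fun measurableSet_Ioi fun t ht ↦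
    congrArg (Complex.exp (-(z * t)) • ·) (h ht)

theorem norm_cexp_smul_eq (f : ℝ → E) (σ : ℝ) (z : ℂ) (t : ℝ) :
    ‖Complex.exp (-(z * t)) • f t‖ =
      Real.exp (-((z.re - σ) * t)) * ‖Real.exp (-(σ * t)) • f t‖ := by
  rw [norm_smul, norm_smul, Complex.norm_exp, Real.norm_eq_abs, Real.abs_exp, ← mul_assoc,
    ← Real.exp_add]
  have hre : (-(z * t)).re = -((z.re - σ) * t) + -(σ * t) := by
    rw [Complex.neg_re, Complex.re_mul_ofReal]
    ring
  rw [hre]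

theorem aestronglyMeasurable_cexp_smul {μ : Measure ℝ}
    (hf : AEStronglyMeasurable (fun t ↦ Real.exp (-(σ * t)) • f t) μ) (z : ℂ) :
    AEStronglyMeasurable (fun t : ℝ ↦ Complex.exp (-(z * t)) • f t) μ := by
  have hcont : Continuous fun t : ℝ ↦ Complex.exp (-((z - σ) * t)) := by fun_prop
  refine (hcont.aestronglyMeasurable.smul hf).congr (Eventually.of_forall fun t ↦ ?_)
  simp only [Pi.smul_apply', ← Complex.coe_smul, smul_smul, Complex.ofReal_exp, ← Complex.exp_add]
  congr 2
  push_cast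
  ring

theorem integrableOn_cexp_smul (hf : IntegrableOn (fun t ↦ Real.exp (-(σ * t)) • f t) (Ioi 0))
    (hz : σ ≤ z.re) : IntegrableOn (fun t : ℝ ↦ Complex.exp (-(z * t)) • f t) (Ioi 0) := by
  refine Integrable.mono hf (aestronglyMeasurable_cexp_smul hf.aestronglyMeasurable z) ?_
  filter_upwards [ae_restrict_mem measurableSet_Ioi] with t ht
  rw [norm_cexp_smul_eq f σ]
  refine mul_le_of_le_one_left (norm_nonneg _) (Real.exp_le_one_iff.2 (neg_nonpos.2 ?_))
  exact mul_nonneg (sub_nonneg.2 hz) (le_of_lt ht)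

theorem integrableOn_exp_smul_of_norm_le_exp {C c : ℝ}
    (hf : AEStronglyMeasurable f (volume.restrict (Ioi 0)))
    (hbound : ∀ t ∈ Ioi (0 : ℝ), ‖f t‖ ≤ C * Real.exp (c * t)) (hσ : c < σ) :
    IntegrableOn (fun t ↦ Real.exp (-(σ * t)) • f t) (Ioi 0) := by
  have hexp : Continuous fun t ↦ Real.exp (-(σ * t)) := by fun_prop
  have hdom : IntegrableOn (fun t ↦ C * Real.exp ((c - σ) * t)) (Ioi 0) :=
    (integrableOn_exp_mul_Ioi (sub_neg.2 hσ) 0).const_mul C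
  refine hdom.mono' (hexp.aestronglyMeasurable.smul hf) ?_
  filter_upwards [ae_restrict_mem measurableSet_Ioi] with t ht
  rw [norm_smul, Real.norm_eq_abs, Real.abs_exp]
  calc Real.exp (-(σ * t)) * ‖f t‖ ≤ Real.exp (-(σ * t)) * (C * Real.exp (c * t)) := by
        gcongr
        exact hbound t ht
    _ = C * (Real.exp (c * t) * Real.exp (-(σ * t))) := by ring
    _ = C * Real.exp ((c - σ) * t) := by rw [← Real.exp_add]; ring_nf

theorem mul_exp_neg_mul_le_inv {δ t : ℝ} (hδ : 0 < δ) : t * Real.exp (-(δ * t)) ≤ δ⁻¹ := by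
  rw [Real.exp_neg, ← div_eq_mul_inv, div_le_iff₀ (Real.exp_pos _), inv_mul_eq_div,
    le_div_iff₀ hδ]
  linarith [Real.add_one_le_exp (δ * t)]

theorem norm_mul_cexp_smul_le {δ t : ℝ} (hδ : 0 < δ) (ht : 0 ≤ t) (hz : δ ≤ z.re - σ) :
    ‖(-(t : ℂ) * Complex.exp (-(z * t))) • f t‖ ≤ δ⁻¹ * ‖Real.exp (-(σ * t)) • f t‖ := by
  rw [mul_smul, norm_smul, norm_cexp_smul_eq f σ, ← mul_assoc, norm_neg, Complex.norm_real,
    Real.norm_of_nonneg ht]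
  gcongr
  calc t * Real.exp (-((z.re - σ) * t)) ≤ t * Real.exp (-(δ * t)) := by gcongr
    _ ≤ δ⁻¹ := mul_exp_neg_mul_le_inv hδ

theorem differentiableOn_laplaceTransform
    (hf : IntegrableOn (fun t ↦ Real.exp (-(σ * t)) • f t) (Ioi 0)) :
    DifferentiableOn ℂ (laplaceTransform f) {z | σ < z.re} := by
  intro z₀ hz₀
  obtain ⟨δ, hδ, hδz₀⟩ : ∃ δ > 0, δ < z₀.re - σ := exists_between (sub_pos.2 hz₀)
  have hnhds : {z : ℂ | σ + δ < z.re} ∈ 𝓝 z₀ :=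
    (isOpen_lt continuous_const Complex.continuous_re).mem_nhds (lt_sub_iff_add_lt'.1 hδz₀)
  have hderiv := hasDerivAt_integral_of_dominated_loc_of_deriv_le (𝕜 := ℂ)
    (F := fun (z : ℂ) (t : ℝ) ↦ Complex.exp (-(z * t)) • f t)
    (F' := fun (z : ℂ) (t : ℝ) ↦ (-(t : ℂ) * Complex.exp (-(z * t))) • f t)
    (bound := fun t ↦ δ⁻¹ * ‖Real.exp (-(σ * t)) • f t‖) hnhds
    (Eventually.of_forall (aestronglyMeasurable_cexp_smul hf.aestronglyMeasurable))
    (integrableOn_cexp_smul hf (le_of_lt hz₀)) ?_ ?_ (hf.norm.const_mul _) ?_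
  · exact hderiv.2.differentiableAt.differentiableWithinAt
  · have hcont : Continuous fun t : ℝ ↦ -(t : ℂ) := by fun_prop
    simp only [mul_smul]
    exact hcont.aestronglyMeasurable.smul
      (aestronglyMeasurable_cexp_smul hf.aestronglyMeasurable z₀)
  · filter_upwards [ae_restrict_mem measurableSet_Ioi] with t ht z hz
    exact norm_mul_cexp_smul_le hδ (le_of_lt ht) (lt_sub_iff_add_lt'.2 hz).le
  · refine Eventually.of_forall fun t z _ ↦ HasDerivAt.smul_const ?_ _
    exact ((((hasDerivAt_id z).mul_const (t : ℂ)).neg).cexp).congr_deriv (by simp [mul_comm])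

theorem fourier_indicator_exp_smul_eq_laplaceTransform (f : ℝ → E) (σ w : ℝ) :
    FourierTransform.fourier ((Ioi 0).indicator fun t ↦ Real.exp (-(σ * t)) • f t) w =
      laplaceTransform f (σ + 2 * Real.pi * w * Complex.I) := by
  rw [Real.fourier_real_eq_integral_exp_smul, laplaceTransform,
    ← integral_indicator measurableSet_Ioi]
  refine integral_congr_ae (Eventually.of_forall fun t ↦ ?_)
  by_cases ht : t ∈ Ioi (0 : ℝ)
  · simp only [indicator_of_mem ht, ← Complex.coe_smul, smul_smul, Complex.ofReal_exp,
      ← Complex.exp_add]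
    congr 2
    push_cast
    ring
  · simp [indicator_of_notMem ht]

theorem eqOn_zero_of_laplaceTransform_eq_zero [CompleteSpace E]
    (hf : IntegrableOn (fun t ↦ Real.exp (-(σ * t)) • f t) (Ioi 0)) (hcont : ContinuousOn f (Ioi 0))
    (hzero : ∀ z : ℂ, z.re = σ → laplaceTransform f z = 0) : EqOn f 0 (Ioi 0) := by
  intro t ht
  set g : ℝ → E := (Ioi 0).indicator fun t ↦ Real.exp (-(σ * t)) • f t
  have hg_int : Integrable g := hf.integrable_indicator measurableSet_Ioi
  have hg_fourier : FourierTransform.fourier g = 0 := by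
    ext w
    rw [fourier_indicator_exp_smul_eq_laplaceTransform]
    exact hzero _ (by simp)
  have hg_cont : ContinuousAt g t := by
    have hexp : Continuous fun t ↦ Real.exp (-(σ * t)) := by fun_prop
    refine ((hexp.continuousOn.smul hcont).continuousAt (Ioi_mem_nhds ht)).congr ?_
    exact eqOn_indicator.symm.eventuallyEq_of_mem (Ioi_mem_nhds ht)
  have hinv := hg_int.fourierInv_fourier_eq (by simp [hg_fourier]) hg_cont
  rw [hg_fourier, Real.fourierInv_eq] at hinv
  have hgt : Real.exp (-(σ * t)) • f t = 0 := by simpa [g, indicator_of_mem ht] using hinv.symm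
  exact (smul_eq_zero.1 hgt).resolve_left (Real.exp_ne_zero _)

theorem eqOn_zero_or_eq_of_laplaceTransform_eq_smul [CompleteSpace E] {F : ℂ → E} {D₁ D₂ : ℂ → ℂ}
    (hf : ∀ σ' > σ, IntegrableOn (fun t ↦ Real.exp (-(σ' * t)) • f t) (Ioi 0))
    (hcont : ContinuousOn f (Ioi 0)) (hD₁ : Differentiable ℂ D₁) (hD₂ : Differentiable ℂ D₂)
    (h₁ : ∀ z, σ < z.re → laplaceTransform f z = D₁ z • F z)
    (h₂ : ∀ z, σ < z.re → laplaceTransform f z = D₂ z • F z) :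
    EqOn f 0 (Ioi 0) ∨ D₁ = D₂ := by
  have hsub : Differentiable ℂ (D₁ - D₂) := hD₁.sub hD₂
  have hopen : IsOpen {z : ℂ | σ < z.re} := isOpen_lt continuous_const Complex.continuous_re
  have hL : DifferentiableOn ℂ (laplaceTransform f) {z | σ < z.re} := fun z hz ↦ by
    obtain ⟨σ', hσ', hz'⟩ := exists_between (show σ < z.re from hz)
    have hnhds := (isOpen_lt continuous_const Complex.continuous_re).mem_nhds hz'
    exact ((differentiableOn_laplaceTransform (hf σ' hσ')).differentiableAt
      hnhds).differentiableWithinAt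
  have hprod : ∀ z ∈ {z : ℂ | σ < z.re}, (D₁ - D₂) z • laplaceTransform f z = 0 := fun z hz ↦ by
    rw [Pi.sub_apply, sub_smul, sub_eq_zero]
    nth_rewrite 1 [h₂ z hz]
    rw [h₁ z hz, smul_comm]
  rcases AnalyticOnNhd.eq_zero_or_eq_zero_of_smul_eq_zero
    (hsub.differentiableOn.analyticOnNhd hopen) (hL.analyticOnNhd hopen) hprod
    (convex_halfSpace_re_gt σ).isPreconnected with hD | hzero
  · refine Or.inr (sub_eq_zero.1 ?_)
    have hmem : (σ + 1 : ℂ) ∈ {z : ℂ | σ < z.re} := by simp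
    exact (hsub.differentiableOn.analyticOnNhd isOpen_univ).eq_of_eventuallyEq
      (analyticOnNhd_const (v := 0)) (Filter.mem_of_superset (hopen.mem_nhds hmem) hD)
  · refine Or.inl (eqOn_zero_of_laplaceTransform_eq_zero (hf (σ + 1) (lt_add_one σ)) hcont ?_)
    exact fun z hz ↦ hzero z ((lt_add_one σ).trans_eq hz.symm)

end LaplaceTransform

section ParametricIntegral

variable {E : Type*} [NormedAddCommGroup E] [NormedSpace ℝ E]

theorem continuousOn_intervalIntegral_of_continuousOn_prod {X : Type*} [TopologicalSpace X]
    {F : ℝ → X → E} {a b : ℝ} {s : Set X} (hab : a ≤ b)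
    (hF : ContinuousOn (fun p : ℝ × X ↦ F p.1 p.2) (Icc a b ×ˢ s)) :
    ContinuousOn (fun t ↦ ∫ x in a..b, F x t) s := by
  have hext : s.domRestrict (fun t ↦ ∫ x in a..b, F x t) =
      fun t : s ↦ ∫ x in a..b, F (projIcc a b hab x) t := by
    ext t
    refine intervalIntegral.integral_congr fun x hx ↦ ?_
    rw [uIcc_of_le hab] at hx
    simp only [projIcc_of_mem hab hx]
  rw [continuousOn_iff_continuous_domRestrict, hext]
  refine intervalIntegral.continuous_parametric_intervalIntegral_of_continuous' ?_ a b
  refine hF.comp_continuous (f := fun p : s × ℝ ↦ ((projIcc a b hab p.2 : ℝ), (p.1 : X))) ?_ ?_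
  · exact (continuous_subtype_val.comp (continuous_projIcc.comp continuous_snd)).prodMk
      (continuous_subtype_val.comp continuous_fst)
  · exact fun p ↦ ⟨(projIcc a b hab p.2).2, p.1.2⟩

theorem hasDerivWithinAt_Ioi_intervalIntegral_of_dominated {F : ℝ → ℝ → E} {F' : ℝ → E}
    {bound : ℝ → ℝ} {a b t : ℝ} (hF : ∀ᶠ τ in 𝓝[>] t, IntervalIntegrable (F τ) volume a b)
    (hFt : IntervalIntegrable (F t) volume a b) (hbound : IntervalIntegrable bound volume a b)
    (hle : ∀ᶠ τ in 𝓝[>] t, ∀ x ∈ Ι a b, ‖F τ x - F t x‖ ≤ bound x * (τ - t))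
    (hderiv : ∀ x ∈ Ι a b, HasDerivWithinAt (fun τ ↦ F τ x) (F' x) (Ioi t) t) :
    HasDerivWithinAt (fun τ ↦ ∫ x in a..b, F τ x) (∫ x in a..b, F' x) (Ioi t) t := by
  rw [hasDerivWithinAt_iff_tendsto_slope' self_notMem_Ioi]
  have hslope : (fun τ ↦ ∫ x in a..b, slope (fun r ↦ F r x) t τ) =ᶠ[𝓝[>] t]
      slope (fun τ ↦ ∫ x in a..b, F τ x) t := by
    filter_upwards [hF] with τ hτ
    simp only [slope_def_module]
    rw [intervalIntegral.integral_smul, intervalIntegral.integral_sub hτ hFt]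
  refine Tendsto.congr' hslope ?_
  refine intervalIntegral.tendsto_integral_filter_of_dominated_convergence bound ?_ ?_ hbound ?_
  · filter_upwards [hF] with τ hτ
    simp only [slope_def_module]
    exact (hτ.sub hFt).def'.aestronglyMeasurable.const_smul _
  · filter_upwards [hle, self_mem_nhdsWithin] with τ hτ hlt
    refine Eventually.of_forall fun x hx ↦ ?_
    have hpos : 0 < τ - t := sub_pos.2 hlt
    rw [slope_def_module, norm_smul, norm_inv, Real.norm_of_nonneg hpos.le, inv_mul_le_iff₀ hpos,
      mul_comm]
    exact hτ x hx
  · exact Eventually.of_forall fun x hx ↦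
      (hasDerivWithinAt_iff_tendsto_slope' self_notMem_Ioi).1 (hderiv x hx)

end ParametricIntegral

section Moments

variable {ψ : ℝ → ℂ} {u : ℝ → ℝ → ℝ}

/-- The moment `∫₀¹ ψ(x) u(x,t) dx` of the temperature profile at time `t` against a weight `ψ`. -/
noncomputable def moment (ψ : ℝ → ℂ) (u : ℝ → ℝ → ℝ) (t : ℝ) : ℂ :=
  ∫ x in (0 : ℝ)..1, ψ x * u x t

theorem continuousOn_moment (hψ : Continuous ψ) {I : Set ℝ}
    (hu : ContinuousOn (fun p : ℝ × ℝ ↦ u p.1 p.2) (Icc 0 1 ×ˢ I)) :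
    ContinuousOn (moment ψ u) I := by
  refine continuousOn_intervalIntegral_of_continuousOn_prod zero_le_one ?_
  exact (hψ.comp continuous_fst).continuousOn.mul (Complex.continuous_ofReal.comp_continuousOn hu)

theorem exists_norm_moment_le (hψ : Continuous ψ) :
    ∃ P, ∀ (u : ℝ → ℝ → ℝ) (t B : ℝ), (∀ x ∈ Icc (0 : ℝ) 1, |u x t| ≤ B) →
      ‖moment ψ u t‖ ≤ P * B := by
  obtain ⟨P, hP⟩ := isCompact_Icc.exists_bound_of_continuousOn (hψ.continuousOn (s := Icc 0 1))
  refine ⟨P, fun u t B hB ↦ ?_⟩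
  have hle : ∀ x ∈ Ι (0 : ℝ) 1, ‖ψ x * u x t‖ ≤ P * B := fun x hx ↦ by
    have hx' : x ∈ Icc (0 : ℝ) 1 := uIcc_of_le (zero_le_one' ℝ) ▸ uIoc_subset_uIcc hx
    rw [norm_mul, Complex.norm_real]
    exact mul_le_mul (hP x hx') (hB x hx') (norm_nonneg _) ((norm_nonneg _).trans (hP x hx'))
  simpa [moment] using intervalIntegral.norm_integral_le_of_norm_le_const hle

theorem tendsto_cexp_mul_moment_atTop (hψ : Continuous ψ) {C c : ℝ} {s : ℂ} (hs : c < s.re)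
    (hu : ∀ x ∈ Icc (0 : ℝ) 1, ∀ t ≥ 0, |u x t| ≤ C * Real.exp (c * t)) :
    Tendsto (fun T : ℝ ↦ Complex.exp (-(s * T)) * moment ψ u T) atTop (𝓝 0) := by
  obtain ⟨P, hP⟩ := exists_norm_moment_le hψ
  have hdecay : Tendsto (fun T : ℝ ↦ P * C * Real.exp (-((s.re - c) * T))) atTop (𝓝 0) := by
    simpa using (Real.tendsto_exp_neg_atTop_nhds_zero.comp
      (tendsto_id.const_mul_atTop (sub_pos.2 hs))).const_mul (P * C)
  refine squeeze_zero_norm' ?_ hdecay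
  filter_upwards [eventually_ge_atTop 0] with T hT
  calc ‖Complex.exp (-(s * T)) * moment ψ u T‖
      = Real.exp (-(s.re * T)) * ‖moment ψ u T‖ := by simp [Complex.norm_exp]
    _ ≤ Real.exp (-(s.re * T)) * (P * (C * Real.exp (c * T))) := by
        gcongr
        exact hP u T _ fun x hx ↦ hu x hx T hT
    _ = P * C * (Real.exp (-(s.re * T)) * Real.exp (c * T)) := by ring
    _ = P * C * Real.exp (-((s.re - c) * T)) := by rw [← Real.exp_add]; ring_nf

end Moments

end HeatInverse

open HeatInverse

namespace IsHeatSolution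

variable {q a : ℝ → ℝ} {u ux uxx ut : ℝ → ℝ → ℝ} {x t : ℝ}

theorem continuousOn (h : IsHeatSolution q a u ux uxx ut) :
    ContinuousOn (fun p : ℝ × ℝ ↦ u p.1 p.2) (Icc 0 1 ×ˢ Ici 0) :=
  h.1

theorem hasDerivAt_fst (h : IsHeatSolution q a u ux uxx ut) (hx : x ∈ Icc (0 : ℝ) 1) (ht : 0 < t) :
    HasDerivAt (fun y ↦ u y t) (ux x t) x :=
  h.2.1 t ht x hx

theorem hasDerivAt_fst_fst (h : IsHeatSolution q a u ux uxx ut) (hx : x ∈ Icc (0 : ℝ) 1)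
    (ht : 0 < t) : HasDerivAt (fun y ↦ ux y t) (uxx x t) x :=
  h.2.2.1 t ht x hx

theorem continuousOn_uxx (h : IsHeatSolution q a u ux uxx ut) (ht : 0 < t) :
    ContinuousOn (fun x ↦ uxx x t) (Icc 0 1) :=
  h.2.2.2.1 t ht

theorem hasDerivAt_snd (h : IsHeatSolution q a u ux uxx ut) (hx : x ∈ Icc (0 : ℝ) 1) (ht : 0 < t) :
    HasDerivAt (u x) (ut x t) t :=
  h.2.2.2.2.1 x hx t ht

theorem continuousOn_ut (h : IsHeatSolution q a u ux uxx ut) (hx : x ∈ Icc (0 : ℝ) 1) :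
    ContinuousOn (ut x) (Ioi 0) :=
  h.2.2.2.2.2.1 x hx

theorem heat_equation (h : IsHeatSolution q a u ux uxx ut) (hx : x ∈ Ioo (0 : ℝ) 1) (ht : 0 < t) :
    ut x t = uxx x t - q x * u x t :=
  h.2.2.2.2.2.2.1 x hx t ht

theorem initial_eq_zero (h : IsHeatSolution q a u ux uxx ut) (hx : x ∈ Icc (0 : ℝ) 1) :
    u x 0 = 0 :=
  h.2.2.2.2.2.2.2.1 x hx

theorem left_eq_zero (h : IsHeatSolution q a u ux uxx ut) (ht : 0 < t) : u 0 t = 0 :=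
  (h.2.2.2.2.2.2.2.2 t ht).1

theorem right_eq_pulse (h : IsHeatSolution q a u ux uxx ut) (ht : 0 < t) : u 1 t = a t :=
  (h.2.2.2.2.2.2.2.2 t ht).2

theorem congr {q' : ℝ → ℝ} (h : IsHeatSolution q a u ux uxx ut) (hq : EqOn q' q (Ioo 0 1)) :
    IsHeatSolution q' a u ux uxx ut := by
  obtain ⟨h₁, h₂, h₃, h₄, h₅, h₆, h_eq, h_rest⟩ := h
  exact ⟨h₁, h₂, h₃, h₄, h₅, h₆, fun x hx t ht ↦ hq hx ▸ h_eq x hx t ht, h_rest⟩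

theorem continuousOn_space_slice (h : IsHeatSolution q a u ux uxx ut) (ht : 0 ≤ t) :
    ContinuousOn (fun x ↦ u x t) (Icc 0 1) :=
  h.continuousOn.comp (f := fun x : ℝ ↦ (x, t)) (by fun_prop) fun _ hx ↦ ⟨hx, ht⟩

theorem continuousOn_time_slice (h : IsHeatSolution q a u ux uxx ut) (hx : x ∈ Icc (0 : ℝ) 1) :
    ContinuousOn (u x) (Ici 0) :=
  h.continuousOn.comp (f := fun t : ℝ ↦ (x, t)) (by fun_prop) fun _ ht ↦ ⟨hx, ht⟩

theorem continuousOn_pulse (h : IsHeatSolution q a u ux uxx ut) : ContinuousOn a (Ioi 0) :=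
  ((h.continuousOn_time_slice (right_mem_Icc.2 zero_le_one)).mono Ioi_subset_Ici_self).congr
    fun _ ht ↦ (h.right_eq_pulse ht).symm

section TimeLipschitz

variable {T M B₁ B₂ : ℝ}

theorem abs_right_sub_le (h : IsHeatSolution q a u ux uxx ut) (ht : 0 < t)
    (hut : ∀ τ ∈ Icc t T, |ut 1 τ| ≤ M) {τ : ℝ} (hτ : τ ∈ Icc t T) :
    |u 1 τ - u 1 t| ≤ M * (τ - t) := by
  have hderiv : ∀ r ∈ Icc t T, HasDerivWithinAt (u 1) (ut 1 r) (Icc t T) r := fun r hr ↦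
    (h.hasDerivAt_snd (right_mem_Icc.2 zero_le_one) (ht.trans_le hr.1)).hasDerivWithinAt
  have hmvt := (convex_Icc t T).norm_image_sub_le_of_norm_hasDerivWithin_le hderiv hut
    (left_mem_Icc.2 (hτ.1.trans hτ.2)) hτ
  rwa [Real.norm_eq_abs, Real.norm_of_nonneg (sub_nonneg.2 hτ.1)] at hmvt

theorem sign_mul_sub_sub_nonpos (h : IsHeatSolution q a u ux uxx ut) (ht : 0 < t)
    (huxx : ∀ x ∈ Icc (0 : ℝ) 1, |uxx x t| ≤ B₁)
    (hqu : ∀ x ∈ Icc (0 : ℝ) 1, ∀ τ ∈ Icc t T, |q x * u x τ| ≤ B₂) (hM : B₁ + B₂ < M)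
    (hut : ∀ τ ∈ Icc t T, |ut 1 τ| ≤ M) {σ : ℝ} (hσ : |σ| = 1)
    {x τ : ℝ} (hx : x ∈ Icc (0 : ℝ) 1) (hτ : τ ∈ Icc t T) :
    σ * (u x τ - u x t) - M * (τ - t) ≤ 0 := by
  have hpos : ∀ {r}, t ≤ r → 0 < r := fun hr ↦ ht.trans_le hr
  have hσ_le : ∀ y, |σ * y| = |y| := fun y ↦ by rw [abs_mul, hσ, one_mul]
  refine le_of_lt_second_deriv_of_le_on_parabolic_boundary
    (v := fun x τ ↦ σ * (u x τ - u x t) - M * (τ - t)) (vx := fun x τ ↦ σ * (ux x τ - ux x t))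
    (vxx := fun x τ ↦ σ * (uxx x τ - uxx x t)) (vt := fun x τ ↦ σ * ut x τ - M * 1)
    ?_ ?_ ?_ ?_ ?_ ?_ ?_ ?_ hx hτ
  · have hu : ContinuousOn (fun p : ℝ × ℝ ↦ u p.1 p.2) (Icc 0 1 ×ˢ Icc t T) :=
      h.continuousOn.mono (prod_mono_right fun r hr ↦ (hpos hr.1).le)
    have hu_t : ContinuousOn (fun p : ℝ × ℝ ↦ u p.1 t) (Icc 0 1 ×ˢ Icc t T) :=
      (h.continuousOn_space_slice ht.le).comp continuousOn_fst fun p hp ↦ hp.1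
    exact (continuousOn_const.mul (hu.sub hu_t)).sub (by fun_prop)
  · intro r hr y hy
    have hy := Ioo_subset_Icc_self hy
    exact (((h.hasDerivAt_fst hy (hpos hr.1.le)).sub
      (h.hasDerivAt_fst hy ht)).const_mul σ).sub_const _
  · intro r hr y hy
    have hy := Ioo_subset_Icc_self hy
    exact ((h.hasDerivAt_fst_fst hy (hpos hr.1.le)).sub (h.hasDerivAt_fst_fst hy ht)).const_mul σ
  · intro r hr y hy
    have hy := Ioo_subset_Icc_self hy
    exact ((((h.hasDerivAt_snd hy (hpos hr.1.le)).sub_const _).const_mul σ).sub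
      (((hasDerivAt_id r).sub_const t).const_mul M)).hasDerivWithinAt
  · intro r hr y hy
    have hy' := Ioo_subset_Icc_self hy
    have h₁ := (le_abs_self _).trans ((hσ_le _).trans_le (huxx y hy'))
    have h₂ := (neg_le_abs _).trans ((hσ_le _).trans_le (hqu y hy' r ⟨hr.1.le, hr.2⟩))
    rw [h.heat_equation hy (hpos hr.1.le)]
    linarith
  · simp
  · intro r hr
    have hM_nonneg : 0 ≤ M := (abs_nonneg _).trans (hut r hr)
    simpa [h.left_eq_zero ht, h.left_eq_zero (hpos hr.1)] using
      mul_nonneg hM_nonneg (sub_nonneg.2 hr.1)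
  · intro r hr
    refine sub_nonpos.2 ((le_abs_self _).trans ?_)
    rw [hσ_le]
    exact h.abs_right_sub_le ht hut hr

theorem exists_abs_sub_le_mul_sub (h : IsHeatSolution q a u ux uxx ut)
    (hq : ContinuousOn q (Icc 0 1)) (ht : 0 < t) (T : ℝ) :
    ∃ M, ∀ x ∈ Icc (0 : ℝ) 1, ∀ τ ∈ Icc t T, |u x τ - u x t| ≤ M * (τ - t) := by
  obtain ⟨B₁, hB₁⟩ := isCompact_Icc.exists_bound_of_continuousOn (h.continuousOn_uxx ht)
  have hqu : ContinuousOn (fun p : ℝ × ℝ ↦ q p.1 * u p.1 p.2) (Icc 0 1 ×ˢ Icc t T) :=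
    (hq.comp continuousOn_fst fun p hp ↦ hp.1).mul
      (h.continuousOn.mono (prod_mono_right fun r hr ↦ ht.le.trans hr.1))
  obtain ⟨B₂, hB₂⟩ := (isCompact_Icc.prod isCompact_Icc).exists_bound_of_continuousOn hqu
  obtain ⟨B₃, hB₃⟩ := isCompact_Icc.exists_bound_of_continuousOn
    ((h.continuousOn_ut (right_mem_Icc.2 zero_le_one)).mono
      fun r (hr : r ∈ Icc t T) ↦ ht.trans_le hr.1)
  have hM : B₁ + B₂ < max (B₁ + B₂ + 1) B₃ := (lt_add_one _).trans_le (le_max_left _ _)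
  have hone_sided := fun (σ : ℝ) (hσ : |σ| = 1) (x : ℝ) (hx : x ∈ Icc (0 : ℝ) 1) (τ : ℝ)
      (hτ : τ ∈ Icc t T) ↦
    h.sign_mul_sub_sub_nonpos ht hB₁ (fun y hy r hr ↦ hB₂ (y, r) ⟨hy, hr⟩) hM
      (fun r hr ↦ (hB₃ r hr).trans (le_max_right _ _)) hσ hx hτ
  refine ⟨max (B₁ + B₂ + 1) B₃, fun x hx τ hτ ↦ abs_le.2 ⟨?_, ?_⟩⟩
  · linarith [hone_sided (-1) (by simp) x hx τ hτ]
  · linarith [hone_sided 1 (by simp) x hx τ hτ]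

end TimeLipschitz

section LaplaceIdentity

variable {a : ℝ → ℝ} {u ux uxx ut : ℝ → ℝ → ℝ} {t : ℝ}

theorem hasDerivWithinAt_moment {q : ℝ → ℝ} (h : IsHeatSolution q a u ux uxx ut)
    (hq : ContinuousOn q (Icc 0 1)) {ψ : ℝ → ℂ} (hψ : Continuous ψ) (ht : 0 < t) :
    HasDerivWithinAt (moment ψ u) (∫ x in (0 : ℝ)..1, ψ x * ut x t) (Ioi t) t := by
  obtain ⟨M, hM⟩ := h.exists_abs_sub_le_mul_sub hq ht (t + 1)
  have hint : ∀ τ ≥ 0, IntervalIntegrable (fun x ↦ ψ x * u x τ) volume 0 1 := fun τ hτ ↦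
    ((hψ.continuousOn.mul (Complex.continuous_ofReal.comp_continuousOn
      (h.continuousOn_space_slice hτ))).mono (uIcc_of_le zero_le_one).subset).intervalIntegrable
  have hmem : ∀ {x}, x ∈ Ι (0 : ℝ) 1 → x ∈ Icc (0 : ℝ) 1 := fun hx ↦
    uIcc_of_le (zero_le_one' ℝ) ▸ uIoc_subset_uIcc hx
  refine hasDerivWithinAt_Ioi_intervalIntegral_of_dominated (bound := fun x ↦ ‖ψ x‖ * M)
    ?_ (hint t ht.le) ((hψ.norm.mul continuous_const).intervalIntegrable 0 1) ?_ ?_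
  · filter_upwards [self_mem_nhdsWithin] with τ hτ using hint τ (ht.trans hτ).le
  · filter_upwards [Ioc_mem_nhdsGT (lt_add_one t)] with τ hτ x hx
    rw [← mul_sub, norm_mul, ← Complex.ofReal_sub, Complex.norm_real, mul_assoc]
    exact mul_le_mul_of_nonneg_left (hM x (hmem hx) τ ⟨hτ.1.le, hτ.2⟩) (norm_nonneg _)
  · exact fun x hx ↦ ((h.hasDerivAt_snd (hmem hx) ht).ofReal_comp.const_mul (ψ x)).hasDerivWithinAt

variable {q : C(ℝ, ℝ)} {s : ℂ}

theorem integral_sineSol_one_sub_mul_ut (h : IsHeatSolution q a u ux uxx ut)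
    (hsym : ∀ x, q (1 - x) = q x) (ht : 0 < t) :
    ∫ x in (0 : ℝ)..1, sineSol q s (1 - x) * ut x t =
      s * moment (fun x ↦ sineSol q s (1 - x)) u t + (a t - sineSol q s 1 * ux 0 t) := by
  set ψ : ℝ → ℂ := fun x ↦ sineSol q s (1 - x)
  have hψ : Continuous ψ := by fun_prop
  have hu : ContinuousOn (fun x ↦ (u x t : ℂ)) (uIcc 0 1) := by
    rw [uIcc_of_le zero_le_one]
    exact Complex.continuous_ofReal.comp_continuousOn (h.continuousOn_space_slice ht.le)
  have huxx : ContinuousOn (fun x ↦ (uxx x t : ℂ)) (uIcc 0 1) := by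
    rw [uIcc_of_le zero_le_one]
    exact Complex.continuous_ofReal.comp_continuousOn (h.continuousOn_uxx ht)
  have hψu_int : IntervalIntegrable (fun x ↦ s * (ψ x * u x t)) volume 0 1 :=
    (hψ.continuousOn.mul hu).intervalIntegrable.const_mul s
  have hdiv_int : IntervalIntegrable (fun x ↦ ψ x * uxx x t - (q x + s) * ψ x * u x t) volume 0 1 :=
    ((hψ.continuousOn.mul huxx).sub
      (ContinuousOn.mul (by fun_prop) hu)).intervalIntegrable
  have hgreen : ∫ x in (0 : ℝ)..1, (ψ x * uxx x t - (q x + s) * ψ x * u x t) =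
      a t - sineSol q s 1 * ux 0 t := by
    rw [intervalIntegral.integral_eq_sub_of_hasDerivAt
      (f := fun x ↦ ψ x * ux x t - -sineSolDeriv q s (1 - x) * u x t) (fun x hx ↦ ?_) hdiv_int]
    · simp [ψ, h.left_eq_zero ht, h.right_eq_pulse ht]
    · rw [uIcc_of_le zero_le_one] at hx
      refine (((hasDerivAt_sineSol_one_sub x).mul (h.hasDerivAt_fst_fst hx ht).ofReal_comp).sub
        ((hasDerivAt_neg_sineSolDeriv_one_sub hsym x).mul
          (h.hasDerivAt_fst hx ht).ofReal_comp)).congr_deriv ?_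
      ring
  rw [← hgreen, moment, ← intervalIntegral.integral_const_mul,
    ← intervalIntegral.integral_add hψu_int hdiv_int]
  refine intervalIntegral.integral_congr_Ioo_of_le zero_le_one fun x hx ↦ ?_
  rw [h.heat_equation hx ht]
  push_cast
  ring

theorem integral_exp_mul_pulse_sub_flux (h : IsHeatSolution q a u ux uxx ut)
    (hsym : ∀ x, q (1 - x) = q x) {T : ℝ} (hT : 0 ≤ T)
    (hint : IntervalIntegrable
      (fun t : ℝ ↦ Complex.exp (-(s * t)) * (a t - sineSol q s 1 * ux 0 t)) volume 0 T) :
    ∫ t in (0 : ℝ)..T, Complex.exp (-(s * t)) * (a t - sineSol q s 1 * ux 0 t) =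
      Complex.exp (-(s * T)) * moment (fun x ↦ sineSol q s (1 - x)) u T := by
  set ψ : ℝ → ℂ := fun x ↦ sineSol q s (1 - x)
  have hψ : Continuous ψ := by fun_prop
  have hinit : moment ψ u 0 = 0 := by
    rw [moment, intervalIntegral.integral_congr (g := 0) fun x hx ↦ ?_]
    · simp
    · rw [uIcc_of_le zero_le_one] at hx
      simp [h.initial_eq_zero hx]
  have hexp : ∀ t : ℝ, HasDerivAt (fun t : ℝ ↦ Complex.exp (-(s * t)))
      (Complex.exp (-(s * t)) * -s) t := fun t ↦ by
    simpa using ((Complex.ofRealCLM.hasDerivAt (x := t)).const_mul s).neg.cexp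
  rw [intervalIntegral.integral_eq_sub_of_hasDeriv_right
    (f := fun t : ℝ ↦ Complex.exp (-(s * t)) * moment ψ u t) ?_ (fun t ht ↦ ?_) hint]
  · simp [hinit]
  · rw [uIcc_of_le hT]
    refine ContinuousOn.mul (by fun_prop) (continuousOn_moment hψ ?_)
    exact h.continuousOn.mono (prod_mono_right Icc_subset_Ici_self)
  · rw [min_eq_left hT] at ht
    refine ((hexp t).hasDerivWithinAt.mul
      (h.hasDerivWithinAt_moment q.continuous.continuousOn hψ ht.1)).congr_deriv ?_
    rw [h.integral_sineSol_one_sub_mul_ut hsym ht.1]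
    ring

end LaplaceIdentity

section Growth

variable {q a : ℝ → ℝ} {u ux uxx ut : ℝ → ℝ → ℝ} {C c σ : ℝ}

theorem aestronglyMeasurable_flux (h : IsHeatSolution q a u ux uxx ut) :
    AEStronglyMeasurable (ux 0) (volume.restrict (Ioi 0)) := by
  have hstep : ∀ n : ℕ, 1 / ((n : ℝ) + 1) ∈ Ioc (0 : ℝ) 1 := fun n ↦
    ⟨by positivity, (div_le_one (by positivity)).2 (by simp)⟩
  refine aestronglyMeasurable_of_tendsto_ae atTop
    (f := fun (n : ℕ) t ↦ slope (fun x ↦ u x t) 0 (1 / ((n : ℝ) + 1))) (fun n ↦ ?_) ?_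
  · simp only [slope_def_module]
    refine ContinuousOn.aestronglyMeasurable (ContinuousOn.fun_const_smul ?_ _) measurableSet_Ioi
    exact ((h.continuousOn_time_slice (Ioc_subset_Icc_self (hstep n))).sub
      (h.continuousOn_time_slice (left_mem_Icc.2 (zero_le_one' ℝ)))).mono Ioi_subset_Ici_self
  · filter_upwards [ae_restrict_mem measurableSet_Ioi] with t ht
    refine (h.hasDerivAt_fst (left_mem_Icc.2 zero_le_one) ht).tendsto_slope.comp ?_
    exact tendsto_nhdsWithin_iff.2 ⟨tendsto_one_div_add_atTop_nhds_zero_nat,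
      Eventually.of_forall fun n ↦ (hstep n).1.ne'⟩

theorem integrableOn_exp_smul_flux (h : IsHeatSolution q a u ux uxx ut)
    (hb : HeatGrowthBound u ux C c) (hσ : c < σ) :
    IntegrableOn (fun t ↦ Real.exp (-(σ * t)) • (ux 0 t : ℂ)) (Ioi 0) := by
  refine integrableOn_exp_smul_of_norm_le_exp (C := C)
    (Complex.continuous_ofReal.comp_aestronglyMeasurable h.aestronglyMeasurable_flux)
    (fun t ht ↦ ?_) hσ
  rw [Complex.norm_real]
  exact (le_add_of_nonneg_left (abs_nonneg _)).trans
    (hb 0 (left_mem_Icc.2 zero_le_one) t (Ioi_subset_Ici_self ht))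

theorem integrableOn_exp_smul_pulse (h : IsHeatSolution q a u ux uxx ut)
    (hb : HeatGrowthBound u ux C c) (hσ : c < σ) :
    IntegrableOn (fun t ↦ Real.exp (-(σ * t)) • (a t : ℂ)) (Ioi 0) := by
  refine integrableOn_exp_smul_of_norm_le_exp (C := C)
    (Complex.continuous_ofReal.comp_aestronglyMeasurable
      (h.continuousOn_pulse.aestronglyMeasurable measurableSet_Ioi)) (fun t ht ↦ ?_) hσ
  rw [Complex.norm_real, ← h.right_eq_pulse ht]
  exact (le_add_of_nonneg_right (abs_nonneg _)).trans
    (hb 1 (right_mem_Icc.2 zero_le_one) t (Ioi_subset_Ici_self ht))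

theorem laplaceTransform_pulse {q : C(ℝ, ℝ)} (h : IsHeatSolution q a u ux uxx ut)
    (hsym : ∀ x, q (1 - x) = q x) (hb : HeatGrowthBound u ux C c) {s : ℂ} (hs : c < s.re) :
    laplaceTransform (fun t ↦ (a t : ℂ)) s =
      sineSol q s 1 * laplaceTransform (fun t ↦ (ux 0 t : ℂ)) s := by
  have hpulse := integrableOn_cexp_smul (h.integrableOn_exp_smul_pulse hb hs) le_rfl
  have hflux := (integrableOn_cexp_smul (h.integrableOn_exp_smul_flux hb hs) le_rfl).const_mul
    (sineSol q s 1)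
  have hsplit : ∀ t : ℝ, Complex.exp (-(s * t)) * (a t - sineSol q s 1 * ux 0 t) =
      Complex.exp (-(s * t)) • (a t : ℂ) -
        sineSol q s 1 * (Complex.exp (-(s * t)) • (ux 0 t : ℂ)) := fun t ↦ by
    simp only [smul_eq_mul]
    ring
  have hint : IntegrableOn
      (fun t : ℝ ↦ Complex.exp (-(s * t)) * (a t - sineSol q s 1 * ux 0 t)) (Ioi 0) := by
    simp only [hsplit]
    exact hpulse.sub hflux
  have hlimit : Tendsto
      (fun T : ℝ ↦ Complex.exp (-(s * T)) * moment (fun x ↦ sineSol q s (1 - x)) u T) atTop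
      (𝓝 (∫ t in Ioi (0 : ℝ), Complex.exp (-(s * t)) * (a t - sineSol q s 1 * ux 0 t))) := by
    refine (intervalIntegral_tendsto_integral_Ioi 0 hint tendsto_id).congr' ?_
    filter_upwards [eventually_ge_atTop 0] with T hT
    exact h.integral_exp_mul_pulse_sub_flux hsym hT
      ((intervalIntegrable_iff_integrableOn_Ioc_of_le hT).2 (hint.mono_set Ioc_subset_Ioi_self))
  have hdecay := tendsto_cexp_mul_moment_atTop (ψ := fun x ↦ sineSol q s (1 - x)) (by fun_prop) hs
    fun x hx t ht ↦ (le_add_of_nonneg_right (abs_nonneg (ux x t))).trans (hb x hx t ht)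
  have hzero := tendsto_nhds_unique hlimit hdecay
  simp only [hsplit] at hzero
  rw [integral_sub hpulse hflux, integral_const_mul] at hzero
  exact sub_eq_zero.1 hzero

end Growth

theorem sineSol_one_eq_of_eqOn_flux {q₁ q₂ : C(ℝ, ℝ)} {a : ℝ → ℝ}
    {u₁ ux₁ uxx₁ ut₁ u₂ ux₂ uxx₂ ut₂ : ℝ → ℝ → ℝ}
    {C₁ c₁ C₂ c₂ : ℝ} (h₁ : IsHeatSolution q₁ a u₁ ux₁ uxx₁ ut₁)
    (h₂ : IsHeatSolution q₂ a u₂ ux₂ uxx₂ ut₂) (hsym₁ : ∀ x, q₁ (1 - x) = q₁ x)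
    (hsym₂ : ∀ x, q₂ (1 - x) = q₂ x) (hb₁ : HeatGrowthBound u₁ ux₁ C₁ c₁)
    (hb₂ : HeatGrowthBound u₂ ux₂ C₂ c₂) (ha : ¬ (a =ᵐ[volume.restrict (Ioi 0)] 0))
    (hflux : EqOn (ux₁ 0) (ux₂ 0) (Ioi 0)) (s : ℂ) : sineSol q₁ s 1 = sineSol q₂ s 1 := by
  have hpulse : ¬ EqOn (fun t ↦ (a t : ℂ)) 0 (Ioi 0) := fun h ↦
    ha ((ae_restrict_mem measurableSet_Ioi).mono fun t ht ↦ Complex.ofReal_eq_zero.1 (h ht))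
  have hL : laplaceTransform (fun t ↦ (ux₂ 0 t : ℂ)) = laplaceTransform (fun t ↦ (ux₁ 0 t : ℂ)) :=
    laplaceTransform_congr fun t ht ↦ congrArg Complex.ofReal (hflux ht).symm
  have hchar := eqOn_zero_or_eq_of_laplaceTransform_eq_smul (σ := max c₁ c₂)
    (fun σ hσ ↦ h₁.integrableOn_exp_smul_pulse hb₁ ((le_max_left _ _).trans_lt hσ))
    (Complex.continuous_ofReal.comp_continuousOn h₁.continuousOn_pulse)
    (differentiable_sineSol q₁ 1) (differentiable_sineSol q₂ 1)
    (fun z hz ↦ h₁.laplaceTransform_pulse hsym₁ hb₁ ((le_max_left _ _).trans_lt hz))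
    (fun z hz ↦ hL ▸ h₂.laplaceTransform_pulse hsym₂ hb₂ ((le_max_right _ _).trans_lt hz))
  exact congrFun (hchar.resolve_left hpulse) s

end IsHeatSolution

theorem flux_at_left_end_determines_symmetric_potential_general {q₁ q₂ a : ℝ → ℝ}
    (hq₁ : ContinuousOn q₁ (Icc 0 1)) (hq₂ : ContinuousOn q₂ (Icc 0 1))
    (hsym₁ : ∀ x ∈ Icc (0 : ℝ) (1 / 2), q₁ (1 / 2 + x) = q₁ (1 / 2 - x))
    (hsym₂ : ∀ x ∈ Icc (0 : ℝ) (1 / 2), q₂ (1 / 2 + x) = q₂ (1 / 2 - x))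
    (ha : ¬ (a =ᵐ[volume.restrict (Ioi 0)] 0))
    {u₁ ux₁ uxx₁ ut₁ u₂ ux₂ uxx₂ ut₂ : ℝ → ℝ → ℝ}
    (hu₁ : IsHeatSolution q₁ a u₁ ux₁ uxx₁ ut₁) (hu₂ : IsHeatSolution q₂ a u₂ ux₂ uxx₂ ut₂)
    {C₁ c₁ C₂ c₂ : ℝ} (hb₁ : HeatGrowthBound u₁ ux₁ C₁ c₁) (hb₂ : HeatGrowthBound u₂ ux₂ C₂ c₂)
    (hflux : EqOn (ux₁ 0) (ux₂ 0) (Ioi 0)) : EqOn q₁ q₂ (Icc 0 1) := by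
  have hext₁ := eqOn_extendUnitInterval hq₁
  have hext₂ := eqOn_extendUnitInterval hq₂
  have hrefl₁ := extendUnitInterval_one_sub hq₁ hsym₁
  have hrefl₂ := extendUnitInterval_one_sub hq₂ hsym₂
  have hchar := (hu₁.congr (hext₁.mono Ioo_subset_Icc_self)).sineSol_one_eq_of_eqOn_flux
    (hu₂.congr (hext₂.mono Ioo_subset_Icc_self)) hrefl₁ hrefl₂ hb₁ hb₂ ha hflux
  exact hext₁.symm.trans ((eqOn_of_sineSol_one_eq hrefl₁ hrefl₂ hchar).trans hext₂)

/-- if two continuous potentials are each symmetric about `x = 1/2` and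
the corresponding classical heat solutions (same admissible pulse `a`) have the same
flux at `x = 0` for all `t > 0`, then the potentials coincide on `[0,1]`. -/
theorem flux_at_left_end_determines_symmetric_potential
    (q1 q2 a : ℝ → ℝ)
    (hq1 : ContinuousOn q1 (Set.Icc 0 1)) (hq2 : ContinuousOn q2 (Set.Icc 0 1))
    (hsym1 : ∀ x ∈ Set.Icc (0:ℝ) (1/2), q1 (1/2 + x) = q1 (1/2 - x))
    (hsym2 : ∀ x ∈ Set.Icc (0:ℝ) (1/2), q2 (1/2 + x) = q2 (1/2 - x))
    (ha : IsAdmissiblePulse a)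
    (u1 ux1 uxx1 ut1 u2 ux2 uxx2 ut2 : ℝ → ℝ → ℝ)
    (hu1 : IsHeatSolution q1 a u1 ux1 uxx1 ut1)
    (hu2 : IsHeatSolution q2 a u2 ux2 uxx2 ut2)
    (hb1 : ∃ C > (0:ℝ), ∃ c > (0:ℝ), HeatGrowthBound u1 ux1 C c)
    (hb2 : ∃ C > (0:ℝ), ∃ c > (0:ℝ), HeatGrowthBound u2 ux2 C c)
    (hflux : ∀ t > (0:ℝ), ux1 0 t = ux2 0 t) :
    ∀ x ∈ Set.Icc (0:ℝ) 1, q1 x = q2 x := by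
  obtain ⟨C₁, -, c₁, -, hgrowth₁⟩ := hb1
  obtain ⟨C₂, -, c₂, -, hgrowth₂⟩ := hb2
  exact flux_at_left_end_determines_symmetric_potential_general hq1 hq2 hsym1 hsym2 ha.2.2
    hu1 hu2 hgrowth₁ hgrowth₂ hflux
end

section
/- Let q be a continuous real-valued potential on [0,1], a an admissible boundary pulse with support in [0,T], and u a classical solution of the heat problem for q with boundary data a, satisfying |u| + |∂x u| ≤ C e^{ct}. Then for every real λ > c, the Laplace transforms B₀(λ) = ∫₀^∞ e^{−λt} ∂x u(0,t) dt and A(λ) = ∫₀^T e^{−λt} a(t) dt satisfy the identity B₀(λ) · φ(1,−λ;q) = A(λ). -/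
/-- `IsSLSolution q nu f f'` : `f` solves `-f'' + q f = nu * f` on `[0,1]`
with `f 0 = 0`, `f' 0 = 1`, where `f'` is the derivative of `f` on `[0,1]`. -/
def IsSLSolution (q : ℝ → ℝ) (ν : ℝ) (φ φ' : ℝ → ℝ) : Prop :=
  (∀ x ∈ Set.Icc (0:ℝ) 1, HasDerivAt φ (φ' x) x) ∧
  (∀ x ∈ Set.Icc (0:ℝ) 1, HasDerivAt φ' (q x * φ x - ν * φ x) x) ∧
  φ 0 = 0 ∧ φ' 0 = 1

/-!
The Laplace transform `U x = ∫₀^∞ e^{-λt} u(x,t) dt` solves `U'' = (q + λ) U`. As `U 0 = 0`,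
uniqueness for this equation gives `U = U' 0 * φ`, where `U' 0` is the transform of the flux, and
the identity is the value at `x = 1`.

The equation for `U` is not a matter of differentiating twice under the integral sign, because
`u_xx` and `u_t` are not controlled jointly in `(x, t)`. Instead, put `v = e^{-λt} u`, so that
`v_t = v_xx - (q + λ) v` and `v` vanishes at `t = 0`. The tail `(x, t) ↦ ∫_t^∞ v(x,s) ds` is a
superposition of time shifts of `v`, hence a uniform limit of classical solutions, and it differs
from `U` by `o(t)`. Thus `U` is `o(τ)`-close to a classical solution on a short window `[0, τ]`.
This accuracy suffices for the maximum principle to compare `U` with the function `p` satisfying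
`p'' = (q + λ) U` and `p = U` at the endpoints; the comparison yields `U = p`.
-/

open Set Filter Topology MeasureTheory

section HeatOperator

/-- `w` solves `w_t = w_xx + f` classically at every point of `I ×ˢ J`. The derivatives in `x` and
in `t` are separate one-variable derivatives; no joint regularity is required. -/
def SolvesHeatOn (I J : Set ℝ) (w f : ℝ → ℝ → ℝ) : Prop :=
  ∃ wx wxx wt : ℝ → ℝ → ℝ, ∀ x ∈ I, ∀ t ∈ J,
    HasDerivAt (fun y => w y t) (wx x t) x ∧ HasDerivAt (fun y => wx y t) (wxx x t) x ∧
    HasDerivAt (fun s => w x s) (wt x t) t ∧ wt x t = wxx x t + f x t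

variable {I J : Set ℝ} {w w₁ w₂ f f₁ f₂ : ℝ → ℝ → ℝ}

theorem SolvesHeatOn.zero : SolvesHeatOn I J (fun _ _ => 0) (fun _ _ => 0) :=
  ⟨fun _ _ => 0, fun _ _ => 0, fun _ _ => 0, fun x _ t _ =>
    ⟨hasDerivAt_const x 0, hasDerivAt_const x 0, hasDerivAt_const t 0, (add_zero 0).symm⟩⟩

theorem SolvesHeatOn.add (h₁ : SolvesHeatOn I J w₁ f₁) (h₂ : SolvesHeatOn I J w₂ f₂) :
    SolvesHeatOn I J (fun x t => w₁ x t + w₂ x t) (fun x t => f₁ x t + f₂ x t) := by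
  obtain ⟨wx₁, wxx₁, wt₁, h₁⟩ := h₁
  obtain ⟨wx₂, wxx₂, wt₂, h₂⟩ := h₂
  refine ⟨fun x t => wx₁ x t + wx₂ x t, fun x t => wxx₁ x t + wxx₂ x t,
    fun x t => wt₁ x t + wt₂ x t, fun x hx t ht => ?_⟩
  obtain ⟨hx₁, hxx₁, ht₁, heq₁⟩ := h₁ x hx t ht
  obtain ⟨hx₂, hxx₂, ht₂, heq₂⟩ := h₂ x hx t ht
  exact ⟨hx₁.add hx₂, hxx₁.add hxx₂, ht₁.add ht₂, by simp only [heq₁, heq₂]; ring⟩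

theorem SolvesHeatOn.const_mul (h : SolvesHeatOn I J w f) (k : ℝ) :
    SolvesHeatOn I J (fun x t => k * w x t) (fun x t => k * f x t) := by
  obtain ⟨wx, wxx, wt, h⟩ := h
  refine ⟨fun x t => k * wx x t, fun x t => k * wxx x t, fun x t => k * wt x t,
    fun x hx t ht => ?_⟩
  obtain ⟨hx, hxx, ht, heq⟩ := h x hx t ht
  exact ⟨hx.const_mul k, hxx.const_mul k, ht.const_mul k, by simp only [heq, mul_add]⟩

theorem SolvesHeatOn.exp_mul (h : SolvesHeatOn I J w f) (k : ℝ) :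
    SolvesHeatOn I J (fun x t => Real.exp (k * t) * w x t)
      (fun x t => Real.exp (k * t) * (f x t + k * w x t)) := by
  obtain ⟨wx, wxx, wt, h⟩ := h
  refine ⟨fun x t => Real.exp (k * t) * wx x t, fun x t => Real.exp (k * t) * wxx x t,
    fun x t => Real.exp (k * t) * (wt x t + k * w x t), fun x hx t ht => ?_⟩
  obtain ⟨hwx, hwxx, hwt, heq⟩ := h x hx t ht
  refine ⟨hwx.const_mul _, hwxx.const_mul _, ?_, by simp only [heq]; ring⟩
  exact ((hasDerivAt_const_mul k).exp.mul hwt).congr_deriv (by ring)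

theorem SolvesHeatOn.comp_add_const (h : SolvesHeatOn I J w f) (s : ℝ) :
    SolvesHeatOn I ((· + s) ⁻¹' J) (fun x t => w x (t + s)) (fun x t => f x (t + s)) := by
  obtain ⟨wx, wxx, wt, h⟩ := h
  refine ⟨fun x t => wx x (t + s), fun x t => wxx x (t + s), fun x t => wt x (t + s),
    fun x hx t ht => ?_⟩
  obtain ⟨hx, hxx, ht, heq⟩ := h x hx (t + s) ht
  exact ⟨hx, hxx, ht.comp_add_const t s, heq⟩

theorem SolvesHeatOn.mono {I' J' : Set ℝ} (h : SolvesHeatOn I J w f) (hI : I' ⊆ I) (hJ : J' ⊆ J) :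
    SolvesHeatOn I' J' w f := by
  obtain ⟨wx, wxx, wt, h⟩ := h
  exact ⟨wx, wxx, wt, fun x hx t ht => h x (hI hx) t (hJ ht)⟩

theorem SolvesHeatOn.congr_source (h : SolvesHeatOn I J w f₁)
    (hf : ∀ x ∈ I, ∀ t ∈ J, f₁ x t = f₂ x t) : SolvesHeatOn I J w f₂ := by
  obtain ⟨wx, wxx, wt, h⟩ := h
  refine ⟨wx, wxx, wt, fun x hx t ht => ?_⟩
  obtain ⟨hwx, hwxx, hwt, heq⟩ := h x hx t ht
  exact ⟨hwx, hwxx, hwt, hf x hx t ht ▸ heq⟩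

end HeatOperator

section Comparison

theorem second_deriv_nonpos_of_isLocalMax {f f' : ℝ → ℝ} {f'' x : ℝ} (hmax : IsLocalMax f x)
    (hf : ∀ᶠ y in 𝓝 x, HasDerivAt f (f' y) y) (hf' : HasDerivAt f' f'' x) : f'' ≤ 0 := by
  have hderiv : deriv f =ᶠ[𝓝 x] f' := hf.mono fun y hy => hy.deriv
  have hsecond : deriv (deriv f) x = f'' := hderiv.deriv_eq.trans hf'.deriv
  by_contra! hpos
  have hmin : IsLocalMin f x := isLocalMin_of_deriv_deriv_pos (hsecond ▸ hpos) hmax.deriv_eq_zero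
    hf.self_of_nhds.continuousAt
  have hconst : f =ᶠ[𝓝 x] fun _ => f x := by
    filter_upwards [hmax, hmin] with y using le_antisymm
  have hzero : deriv (deriv f) x = 0 := by simpa using hconst.deriv.deriv_eq
  exact hpos.ne' (hsecond ▸ hzero)

variable {w f : ℝ → ℝ → ℝ} {ψ ψ' : ℝ → ℝ}

theorem SolvesHeatOn.sub_le_source_of_forall_le {I J : Set ℝ} (h : SolvesHeatOn I J w f)
    {x₀ t₀ : ℝ} (hI : I ∈ 𝓝 x₀) (hJ : J ∈ 𝓝 t₀) {ψ'' ρ' : ℝ} {ρ : ℝ → ℝ}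
    (hψ : ∀ x ∈ I, HasDerivAt ψ (ψ' x) x) (hψ' : HasDerivAt ψ' ψ'' x₀) (hρ : HasDerivAt ρ ρ' t₀)
    (hmax : ∀ x ∈ I, ∀ t ∈ J, w x t - ψ x - ρ t ≤ w x₀ t₀ - ψ x₀ - ρ t₀) :
    ρ' - ψ'' ≤ f x₀ t₀ := by
  obtain ⟨wx, wxx, wt, h⟩ := h
  have hx₀ := mem_of_mem_nhds hI
  have ht₀ := mem_of_mem_nhds hJ
  obtain ⟨-, hwxx, hwt, heq⟩ := h x₀ hx₀ t₀ ht₀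
  have htime : wt x₀ t₀ - ρ' = 0 := by
    have hlocal : IsLocalMax (fun t => w x₀ t - ψ x₀ - ρ t) t₀ := by
      filter_upwards [hJ] with t ht using hmax x₀ hx₀ t ht
    exact hlocal.hasDerivAt_eq_zero ((hwt.sub_const _).sub hρ)
  have hspace : wxx x₀ t₀ - ψ'' ≤ 0 := by
    have hlocal : IsLocalMax (fun x => w x t₀ - ψ x - ρ t₀) x₀ := by
      filter_upwards [hI] with x hx using hmax x hx t₀ ht₀
    refine second_deriv_nonpos_of_isLocalMax hlocal ?_ (hwxx.sub hψ')
    filter_upwards [hI] with x hx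
    exact ((h x hx t₀ ht₀).1.sub (hψ x hx)).sub_const _
  linarith

-- A maximum of `w - ψ - κ (t - t₀) ^ 2` cannot lie at `t = t₀ ± r` because `w` oscillates by less
-- than `κ * r ^ 2` in time; this replaces the comparison of initial values.
theorem SolvesHeatOn.le_barrier {a b t₀ r κ : ℝ} {ψ'' : ℝ → ℝ} (hr : 0 < r)
    (h : SolvesHeatOn (Ioo a b) (Ioo (t₀ - r) (t₀ + r)) w f)
    (hw : ContinuousOn (fun z : ℝ × ℝ => w z.1 z.2) (Icc a b ×ˢ Icc (t₀ - r) (t₀ + r)))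
    (hψ : ∀ x ∈ Icc a b, HasDerivAt ψ (ψ' x) x) (hψ' : ∀ x ∈ Ioo a b, HasDerivAt ψ' (ψ'' x) x)
    (hlat : ∀ t ∈ Icc (t₀ - r) (t₀ + r), w a t ≤ ψ a ∧ w b t ≤ ψ b)
    (hosc : ∀ x ∈ Icc a b, ∀ t ∈ Icc (t₀ - r) (t₀ + r), w x t < w x t₀ + κ * r ^ 2)
    (hsource : ∀ x ∈ Ioo a b, ∀ t ∈ Ioo (t₀ - r) (t₀ + r), f x t + ψ'' x + 2 * κ * r < 0)
    {x : ℝ} (hx : x ∈ Icc a b) : w x t₀ ≤ ψ x := by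
  by_contra! hlt
  have hmid : t₀ ∈ Icc (t₀ - r) (t₀ + r) := ⟨by linarith, by linarith⟩
  have hκ : 0 < κ := pos_of_mul_pos_left (by linarith [hosc x hx t₀ hmid]) (sq_nonneg r)
  have hcont : ContinuousOn (fun z : ℝ × ℝ => w z.1 z.2 - ψ z.1 - κ * (z.2 - t₀) ^ 2)
      (Icc a b ×ˢ Icc (t₀ - r) (t₀ + r)) := by
    have hψc : ContinuousOn ψ (Icc a b) := HasDerivAt.continuousOn hψ
    exact (hw.sub (hψc.comp continuousOn_fst fun z hz => hz.1)).sub (by fun_prop)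
  obtain ⟨⟨x₀, s⟩, ⟨hx₀, hs⟩, hmax⟩ :=
    (isCompact_Icc.prod isCompact_Icc).exists_isMaxOn ⟨(x, t₀), hx, hmid⟩ hcont
  replace hmax : ∀ y ∈ Icc a b, ∀ t ∈ Icc (t₀ - r) (t₀ + r),
      w y t - ψ y - κ * (t - t₀) ^ 2 ≤ w x₀ s - ψ x₀ - κ * (s - t₀) ^ 2 :=
    fun y hy t ht => hmax (mk_mem_prod hy ht)
  dsimp only at hx₀ hs
  have hpos : ψ x₀ < w x₀ s := by
    have := hmax x hx t₀ hmid
    nlinarith [mul_nonneg hκ.le (sq_nonneg (s - t₀))]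
  have hx₀' : x₀ ∈ Ioo a b :=
    ⟨hx₀.1.lt_of_ne' fun h => (h ▸ hpos).not_ge (hlat s hs).1,
      hx₀.2.lt_of_ne fun h => (h ▸ hpos).not_ge (hlat s hs).2⟩
  have hs' : s ∈ Ioo (t₀ - r) (t₀ + r) := by
    have hosc' : κ * (s - t₀) ^ 2 < κ * r ^ 2 := by
      linarith [hmax x₀ hx₀ t₀ hmid, hosc x₀ hx₀ s hs, show κ * (t₀ - t₀) ^ 2 = 0 by ring]
    have := abs_lt_of_sq_lt_sq' (lt_of_mul_lt_mul_left hosc' hκ.le) hr.le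
    exact ⟨by linarith, by linarith⟩
  have hpenalty : HasDerivAt (fun t => κ * (t - t₀) ^ 2) (κ * (2 * (s - t₀))) s := by
    simpa using (((hasDerivAt_id s).sub_const t₀).pow 2).const_mul κ
  have htouch := h.sub_le_source_of_forall_le (Ioo_mem_nhds hx₀'.1 hx₀'.2)
    (Ioo_mem_nhds hs'.1 hs'.2) (fun y hy => hψ y (Ioo_subset_Icc_self hy)) (hψ' x₀ hx₀') hpenalty
    fun y hy t ht => hmax y (Ioo_subset_Icc_self hy) t (Ioo_subset_Icc_self ht)
  nlinarith [hsource x₀ hx₀' s hs', hs'.1]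

end Comparison

section ApproxEquilibrium

/-- On arbitrarily short time windows `[0, τ]`, the time-independent profile `U` is uniformly
`o(τ)`-close to a solution of `R_t = R_xx - Q R`. For a twice differentiable `U` this forces
`U'' = Q U`; the definition makes sense without any derivative of `U`. -/
def IsApproxEquilibrium (a b : ℝ) (Q U : ℝ → ℝ) : Prop :=
  ∀ η > 0, ∃ τ, 0 < τ ∧ τ ≤ 1 ∧ ∃ R : ℝ → ℝ → ℝ,
    ContinuousOn (fun z : ℝ × ℝ => R z.1 z.2) (Icc a b ×ˢ Icc 0 τ) ∧
    SolvesHeatOn (Ioo a b) (Ioo 0 τ) R (fun x t => -(Q x * R x t)) ∧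
    ∀ x ∈ Icc a b, ∀ t ∈ Icc 0 τ, |R x t - U x| ≤ η * τ

variable {a b K : ℝ} {Q U p p' : ℝ → ℝ} {x : ℝ}

theorem SolvesHeatOn.apply_half_le_of_forall_abs_sub_le {η τ : ℝ}
    {R : ℝ → ℝ → ℝ} (hR : SolvesHeatOn (Ioo a b) (Ioo 0 τ) R
    (fun x t => -(Q x * R x t))) (hη : 0 < η) (hτ : 0 < τ) (hτ₁ : τ ≤ 1)
    (hRc : ContinuousOn (fun z : ℝ × ℝ => R z.1 z.2) (Icc a b ×ˢ Icc 0 τ))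
    (hclose : ∀ x ∈ Icc a b, ∀ t ∈ Icc 0 τ, |R x t - U x| ≤ η * τ)
    (hQ : ∀ x ∈ Icc a b, |Q x| ≤ K) (hp : ∀ x ∈ Icc a b, HasDerivAt p (p' x) x)
    (hp' : ∀ x ∈ Ioo a b, HasDerivAt p' (Q x * U x) x) (ha : U a = p a) (hb : U b = p b)
    (hx : x ∈ Icc a b) :
    R x (τ / 2) ≤ p x + η * τ + (K + 7) * η * ((x - a) * (b - x)) := by
  have hab := hx.1.trans hx.2
  have hK : 0 ≤ K := (abs_nonneg _).trans (hQ x hx)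
  have hητ : η * τ ≤ η := mul_le_of_le_one_right hη.le hτ₁
  have hmid : τ / 2 ∈ Icc 0 τ := ⟨by linarith, by linarith⟩
  set δ := (K + 7) * η with hδ
  -- The penalty `κ * (τ / 2) ^ 2 = 3 * η * τ` exceeds the oscillation `2 * η * τ` of `R`; the
  -- concavity `2 * δ` of the barrier absorbs `2 * κ * (τ / 2) = 12 * η` and the error `K * η` in
  -- the potential term.
  refine SolvesHeatOn.le_barrier (ψ := fun x => p x + η * τ + δ * ((x - a) * (b - x)))
    (ψ' := fun x => p' x + δ * (a + b - 2 * x)) (ψ'' := fun x => Q x * U x - 2 * δ)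
    (κ := 12 * η / τ) (half_pos hτ) (by simpa only [sub_self, add_halves] using hR)
    (by simpa only [sub_self, add_halves] using hRc) ?_ ?_ ?_ ?_ ?_ hx
  · intro y hy
    have hbump := ((hasDerivAt_id y).sub_const a).mul ((hasDerivAt_id y).const_sub b)
    refine (((hp y hy).add_const _).add (hbump.const_mul δ)).congr_deriv ?_
    simp only [id]; ring
  · intro y hy
    have hbump' := ((hasDerivAt_id y).const_mul 2).const_sub (a + b)
    exact ((hp' y hy).add (hbump'.const_mul δ)).congr_deriv (by ring)
  · intro t ht
    rw [sub_self, add_halves] at ht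
    have hclose_a := abs_le.1 (hclose a (left_mem_Icc.2 hab) t ht)
    have hclose_b := abs_le.1 (hclose b (right_mem_Icc.2 hab) t ht)
    constructor <;> nlinarith
  · intro y hy t ht
    rw [sub_self, add_halves] at ht
    have hclose_t := abs_le.1 (hclose y hy t ht)
    have hclose_mid := abs_le.1 (hclose y hy (τ / 2) hmid)
    have hpenalty : 12 * η / τ * (τ / 2) ^ 2 = 3 * (η * τ) := by field_simp; ring
    nlinarith [mul_pos hη hτ]
  · intro y hy t ht
    rw [sub_self, add_halves] at ht
    have hy := Ioo_subset_Icc_self hy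
    have hpot : |Q y * (R y t - U y)| ≤ K * η := by
      rw [abs_mul]
      exact mul_le_mul (hQ y hy) ((hclose y hy t (Ioo_subset_Icc_self ht)).trans hητ)
        (abs_nonneg _) hK
    have hrate : 2 * (12 * η / τ) * (τ / 2) = 12 * η := by field_simp
    nlinarith [(abs_le.1 hpot).1, mul_nonneg hK hη.le, hδ]

namespace IsApproxEquilibrium

theorem neg (h : IsApproxEquilibrium a b Q U) : IsApproxEquilibrium a b Q (fun x => -U x) := by
  intro η hη
  obtain ⟨τ, hτ, hτ₁, R, hRc, hR, hclose⟩ := h η hη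
  refine ⟨τ, hτ, hτ₁, fun x t => -1 * R x t, continuousOn_const.mul hRc,
    (hR.const_mul (-1)).congr_source fun x _ t _ => by ring, fun x hx t ht => ?_⟩
  simp only [neg_one_mul, neg_sub_neg]
  rw [abs_sub_comm]
  exact hclose x hx t ht

theorem le_of_hasDerivAt_hasDerivAt (h : IsApproxEquilibrium a b Q U)
    (hQ : ∀ x ∈ Icc a b, |Q x| ≤ K) (hp : ∀ x ∈ Icc a b, HasDerivAt p (p' x) x)
    (hp' : ∀ x ∈ Ioo a b, HasDerivAt p' (Q x * U x) x) (ha : U a = p a) (hb : U b = p b)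
    (hx : x ∈ Icc a b) : U x ≤ p x := by
  have hK : 0 ≤ K := (abs_nonneg _).trans (hQ x hx)
  suffices hbound : ∀ η > 0, U x ≤ p x + η * (2 + (K + 7) * ((x - a) * (b - x))) by
    have hD : 0 < 2 + (K + 7) * ((x - a) * (b - x)) := by
      nlinarith [mul_nonneg (sub_nonneg.2 hx.1) (sub_nonneg.2 hx.2)]
    refine le_of_forall_pos_le_add fun ε hε => ?_
    simpa only [div_mul_cancel₀ _ hD.ne'] using hbound _ (div_pos hε hD)
  intro η hη
  obtain ⟨τ, hτ, hτ₁, R, hRc, hR, hclose⟩ := h η hη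
  have hητ : η * τ ≤ η := mul_le_of_le_one_right hη.le hτ₁
  have hmid : τ / 2 ∈ Icc 0 τ := ⟨by linarith, by linarith⟩
  have hwindow := hR.apply_half_le_of_forall_abs_sub_le hη hτ hτ₁ hRc hclose hQ hp hp' ha hb hx
  linarith [(abs_le.1 (hclose x hx _ hmid)).1]

theorem eq_of_hasDerivAt_hasDerivAt (h : IsApproxEquilibrium a b Q U)
    (hQ : ∀ x ∈ Icc a b, |Q x| ≤ K) (hp : ∀ x ∈ Icc a b, HasDerivAt p (p' x) x)
    (hp' : ∀ x ∈ Ioo a b, HasDerivAt p' (Q x * U x) x) (ha : U a = p a) (hb : U b = p b)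
    (hx : x ∈ Icc a b) : U x = p x := by
  refine le_antisymm (h.le_of_hasDerivAt_hasDerivAt hQ hp hp' ha hb hx) (neg_le_neg_iff.1 ?_)
  exact h.neg.le_of_hasDerivAt_hasDerivAt hQ (fun y hy => (hp y hy).neg)
    (fun y hy => (hp' y hy).neg.congr_deriv (by ring)) (by rw [ha]; rfl) (by rw [hb]; rfl) hx

end IsApproxEquilibrium

end ApproxEquilibrium

section SturmLiouville

/-- `y'' = Q y` on `[a, b]`, where `y'` is the derivative of `y`; derivatives at the endpoints are
one-sided. -/
def SolvesSturmLiouvilleOn (a b : ℝ) (Q y y' : ℝ → ℝ) : Prop :=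
  ∀ x ∈ Icc a b, HasDerivWithinAt y (y' x) (Icc a b) x ∧
    HasDerivWithinAt y' (Q x * y x) (Icc a b) x

variable {a b K : ℝ} {Q U y y' z z' : ℝ → ℝ}

theorem SolvesSturmLiouvilleOn.const_mul (h : SolvesSturmLiouvilleOn a b Q y y') (k : ℝ) :
    SolvesSturmLiouvilleOn a b Q (fun x => k * y x) (fun x => k * y' x) := fun x hx =>
  ⟨(h x hx).1.const_mul k, ((h x hx).2.const_mul k).congr_deriv (mul_left_comm ..)⟩

theorem SolvesSturmLiouvilleOn.eqOn (hQ : ∀ x ∈ Icc a b, |Q x| ≤ K)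
    (hy : SolvesSturmLiouvilleOn a b Q y y') (hz : SolvesSturmLiouvilleOn a b Q z z')
    (h₀ : y a = z a) (h₁ : y' a = z' a) : EqOn y z (Icc a b) := by
  have hfield : ∀ x ∈ Ico a b, LipschitzOnWith (max 1 K.toNNReal)
      (fun v : ℝ × ℝ => (v.2, Q x * v.1)) univ := fun x hx => by
    have hnorm : ‖Q x‖₊ * 1 ≤ K.toNNReal := by
      rw [mul_one, ← norm_toNNReal]
      exact Real.toNNReal_le_toNNReal (hQ x (Ico_subset_Icc_self hx))
    have hlip : LipschitzWith K.toNNReal fun v : ℝ × ℝ => Q x * v.1 :=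
      ((lipschitzWith_smul (Q x)).comp LipschitzWith.prod_fst).weaken hnorm
    exact (LipschitzWith.prod_snd.prodMk hlip).lipschitzOnWith
  have hcont : ∀ {w w' : ℝ → ℝ}, SolvesSturmLiouvilleOn a b Q w w' →
      ContinuousOn (fun x => (w x, w' x)) (Icc a b) := fun hw x hx =>
    (hw x hx).1.continuousWithinAt.prodMk (hw x hx).2.continuousWithinAt
  have hderiv : ∀ {w w' : ℝ → ℝ}, SolvesSturmLiouvilleOn a b Q w w' → ∀ x ∈ Ico a b,
      HasDerivWithinAt (fun x => (w x, w' x)) (w' x, Q x * w x) (Ici x) x := fun hw x hx =>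
    have hmem := Icc_mem_nhdsGE_of_mem hx
    have hx := hw x (Ico_subset_Icc_self hx)
    (hx.1.prodMk hx.2).mono_of_mem_nhdsWithin hmem
  have hphase := ODE_solution_unique_of_mem_Icc_right hfield (hcont hy) (hderiv hy)
    (fun _ _ => mem_univ _) (hcont hz) (hderiv hz) (fun _ _ => mem_univ _) (Prod.ext h₀ h₁)
  exact fun x hx => congrArg Prod.fst (hphase hx)

theorem exists_hasDerivAt_hasDerivAt_of_boundary_values {a b : ℝ} (hab : a ≠ b) {g : ℝ → ℝ}
    (hg : Continuous g) (α β : ℝ) :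
    ∃ p p' : ℝ → ℝ, (∀ x, HasDerivAt p (p' x) x) ∧ (∀ x, HasDerivAt p' (g x) x) ∧
      p a = α ∧ p b = β := by
  have hprim : ∀ {f : ℝ → ℝ}, Continuous f → ∀ x, HasDerivAt (fun y => ∫ s in a..y, f s) (f x) x :=
    fun hf x => (hf.integral_hasStrictDerivAt a x).hasDerivAt
  have hG : Continuous fun y => ∫ s in a..y, g s :=
    continuous_iff_continuousAt.2 fun x => (hprim hg x).continuousAt
  set P : ℝ → ℝ := fun y => ∫ r in a..y, ∫ s in a..r, g s
  set m := (β - α - P b) / (b - a)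
  refine ⟨fun x => P x + (α + m * (x - a)), fun x => (∫ s in a..x, g s) + m, fun x => ?_,
    fun x => (hprim hg x).add_const m, by simp [P], ?_⟩
  · exact ((hprim hG x).add ((((hasDerivAt_id x).sub_const a).const_mul m).const_add α)).congr_deriv
      (by rw [mul_one])
  · simp only [m, div_mul_cancel₀ _ (sub_ne_zero.2 hab.symm)]
    ring

theorem IsApproxEquilibrium.exists_solvesSturmLiouvilleOn (hab : a < b)
    (h : IsApproxEquilibrium a b Q U) (hQ : ContinuousOn Q (Icc a b))
    (hU : ContinuousOn U (Icc a b)) : ∃ U', SolvesSturmLiouvilleOn a b Q U U' := by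
  obtain ⟨K, hK⟩ := isCompact_Icc.exists_bound_of_continuousOn hQ
  set g := IccExtend hab.le ((Icc a b).domRestrict fun x => Q x * U x)
  have hg : Continuous g := (continuousOn_iff_continuous_domRestrict.1 (hQ.mul hU)).Icc_extend'
  have hgQU : ∀ x ∈ Icc a b, g x = Q x * U x := fun x hx => IccExtend_of_mem _ _ hx
  obtain ⟨p, p', hp, hp', ha, hb⟩ :=
    exists_hasDerivAt_hasDerivAt_of_boundary_values hab.ne hg (U a) (U b)
  have hUp : ∀ x ∈ Icc a b, U x = p x := fun x hx =>
    h.eq_of_hasDerivAt_hasDerivAt hK (fun y _ => hp y)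
      (fun y hy => hgQU y (Ioo_subset_Icc_self hy) ▸ hp' y) ha.symm hb.symm hx
  exact ⟨p', fun x hx => ⟨(hp x).hasDerivWithinAt.congr hUp (hUp x hx),
    hgQU x hx ▸ (hp' x).hasDerivWithinAt⟩⟩

end SturmLiouville

section IntegralClosed

theorem integral_mem_of_isClosed {Ω E : Type*} [MeasurableSpace Ω] {μ : Measure Ω}
    [NormedAddCommGroup E] [NormedSpace ℝ E] [CompleteSpace E] {S : Submodule ℝ E}
    (hS : IsClosed (S : Set E)) {F : Ω → E} (hF : ∀ᵐ ω ∂μ, F ω ∈ S) : ∫ ω, F ω ∂μ ∈ S := by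
  by_cases hint : Integrable F μ
  · rw [← S.ker_mkQ, LinearMap.mem_ker]
    calc S.mkQL (∫ ω, F ω ∂μ) = ∫ ω, S.mkQL (F ω) ∂μ := (S.mkQL.integral_comp_comm hint).symm
      _ = 0 := integral_eq_zero_of_ae <| hF.mono fun ω h => (Submodule.Quotient.mk_eq_zero S).2 h
  · rw [integral_undef hint]
    exact S.zero_mem

end IntegralClosed

section TimeShift

theorem integral_Ioi_comp_const_add {E : Type*} [NormedAddCommGroup E] [NormedSpace ℝ E]
    (f : ℝ → E) (t : ℝ) : ∫ s in Ioi 0, f (t + s) = ∫ s in Ioi t, f s := by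
  have := (measurePreserving_add_left volume t).setIntegral_preimage_emb
    (measurableEmbedding_addLeft t) f (Ioi t)
  simpa only [preimage_const_add_Ioi, sub_self] using this

/-- The classical solutions of `R_t = R_xx - Q R` inside the window `[a, b] × [0, τ]` that are
continuous up to its boundary, as a subspace of the continuous functions on the window. -/
def heatSolutions (Q : ℝ → ℝ) (a b τ : ℝ) : Submodule ℝ C(Icc a b × Icc 0 τ, ℝ) where
  carrier := {f | ∃ R : ℝ → ℝ → ℝ, (∀ z, f z = R z.1 z.2) ∧
    SolvesHeatOn (Ioo a b) (Ioo 0 τ) R (fun x t => -(Q x * R x t))}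
  zero_mem' := ⟨fun _ _ => 0, fun _ => rfl, SolvesHeatOn.zero.congr_source fun _ _ _ _ => by simp⟩
  add_mem' := by
    rintro f₁ f₂ ⟨R₁, hf₁, hR₁⟩ ⟨R₂, hf₂, hR₂⟩
    exact ⟨fun x t => R₁ x t + R₂ x t, fun z => congrArg₂ (· + ·) (hf₁ z) (hf₂ z),
      (hR₁.add hR₂).congr_source fun _ _ _ _ => by ring⟩
  smul_mem' := by
    rintro k f ⟨R, hf, hR⟩
    exact ⟨fun x t => k * R x t, fun z => congrArg (k * ·) (hf z),
      (hR.const_mul k).congr_source fun _ _ _ _ => by ring⟩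

variable {a b : ℝ} {Q : ℝ → ℝ} {v : ℝ → ℝ → ℝ} {g : ℝ → ℝ}

/-- The restriction of `(x, t) ↦ v x (t + s)` to the window `[a, b] × [0, τ]`, as a continuous
family of continuous functions indexed by the shift `s`. Negative shifts are replaced by `0`. -/
def timeShift (hv : ContinuousOn (fun z : ℝ × ℝ => v z.1 z.2) (Icc a b ×ˢ Ici 0)) (τ : ℝ) :
    C(ℝ, C(Icc a b × Icc 0 τ, ℝ)) :=
  ContinuousMap.curry
    { toFun := fun z => v z.2.1 (z.2.2 + max z.1 0)
      continuous_toFun := hv.comp_continuous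
        (f := fun z : ℝ × Icc a b × Icc 0 τ => ((z.2.1 : ℝ), (z.2.2 : ℝ) + max z.1 0))
        (by fun_prop) fun z => ⟨z.2.1.2, add_nonneg z.2.2.2.1 (le_max_right _ _)⟩ }

variable {hv : ContinuousOn (fun z : ℝ × ℝ => v z.1 z.2) (Icc a b ×ˢ Ici 0)} {s τ : ℝ}

theorem timeShift_apply (hs : 0 ≤ s) (z : Icc a b × Icc 0 τ) :
    timeShift hv τ s z = v z.1 (z.2 + s) :=
  congrArg (fun r => v z.1 (z.2 + r)) (max_eq_left hs)

theorem timeShift_mem_heatSolutions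
    (h : SolvesHeatOn (Ioo a b) (Ioi 0) v (fun x t => -(Q x * v x t))) (hs : 0 ≤ s) :
    timeShift hv τ s ∈ heatSolutions Q a b τ :=
  ⟨fun x t => v x (t + s), timeShift_apply hs,
    (h.comp_add_const s).mono Subset.rfl fun _ ht => add_pos_of_pos_of_nonneg ht.1 hs⟩

theorem norm_timeShift_le (hab : a ≤ b) (hbound : ∀ x ∈ Icc a b, ∀ t ∈ Ici 0, |v x t| ≤ g t)
    (hg : AntitoneOn g (Ici 0)) (hs : 0 ≤ s) : ‖timeShift hv τ s‖ ≤ g s := by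
  refine (ContinuousMap.norm_le _ ((abs_nonneg _).trans
    (hbound a (left_mem_Icc.2 hab) s hs))).2 fun z => ?_
  have hts : 0 ≤ z.2 + s := add_nonneg z.2.2.1 hs
  rw [timeShift_apply hs]
  exact (hbound _ z.1.2 _ hts).trans (hg hs hts (le_add_of_nonneg_left z.2.2.1))

theorem integrableOn_timeShift (hab : a ≤ b)
    (hbound : ∀ x ∈ Icc a b, ∀ t ∈ Ici 0, |v x t| ≤ g t) (hg : AntitoneOn g (Ici 0))
    (hgint : IntegrableOn g (Ioi 0)) : IntegrableOn (timeShift hv τ) (Ioi 0) := by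
  refine hgint.mono' (timeShift hv τ).continuous.aestronglyMeasurable ?_
  filter_upwards [ae_restrict_mem measurableSet_Ioi] with s hs
  exact norm_timeShift_le hab hbound hg (mem_Ioi.1 hs).le

theorem integral_timeShift_apply (hint : IntegrableOn (timeShift hv τ) (Ioi 0))
    (z : Icc a b × Icc 0 τ) :
    (∫ s in Ioi 0, timeShift hv τ s) z = ∫ s in Ioi (z.2 : ℝ), v z.1 s := by
  rw [ContinuousMap.integral_apply hint, ← integral_Ioi_comp_const_add (v z.1)]
  exact setIntegral_congr_fun measurableSet_Ioi fun s hs => timeShift_apply (mem_Ioi.1 hs).le z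

theorem integral_timeShift_mem_closure
    (h : SolvesHeatOn (Ioo a b) (Ioi 0) v (fun x t => -(Q x * v x t))) :
    ∫ s in Ioi 0, timeShift hv τ s ∈ closure (heatSolutions Q a b τ : Set _) := by
  rw [← Submodule.topologicalClosure_coe]
  refine integral_mem_of_isClosed (Submodule.isClosed_topologicalClosure _) ?_
  filter_upwards [ae_restrict_mem measurableSet_Ioi] with s hs
  exact Submodule.le_topologicalClosure _ (timeShift_mem_heatSolutions h (mem_Ioi.1 hs).le)

end TimeShift

section LaplaceIntegral

variable {a b : ℝ} {Q : ℝ → ℝ} {v : ℝ → ℝ → ℝ} {g : ℝ → ℝ}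

theorem exists_window_forall_abs_le
    (hv : ContinuousOn (fun z : ℝ × ℝ => v z.1 z.2) (Icc a b ×ˢ Ici 0))
    (hv₀ : ∀ x ∈ Icc a b, v x 0 = 0) {ε : ℝ} (hε : 0 < ε) :
    ∃ τ, 0 < τ ∧ τ ≤ 1 ∧ ∀ x ∈ Icc a b, ∀ t ∈ Icc 0 τ, |v x t| ≤ ε := by
  have huc : UniformContinuousOn (fun z : ℝ × ℝ => v z.1 z.2) (Icc a b ×ˢ Icc 0 1) :=
    (isCompact_Icc.prod isCompact_Icc).uniformContinuousOn_of_continuous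
      (hv.mono (prod_mono Subset.rfl Icc_subset_Ici_self))
  obtain ⟨δ, hδ, hclose⟩ := Metric.uniformContinuousOn_iff_le.1 huc ε hε
  refine ⟨min δ 1, lt_min hδ one_pos, min_le_right _ _, fun x hx t ht => ?_⟩
  have ht₁ : t ∈ Icc 0 1 := ⟨ht.1, ht.2.trans (min_le_right _ _)⟩
  have hdist : dist (x, t) (x, 0) ≤ δ := by
    rw [dist_prod_same_left, Real.dist_0_eq_abs, abs_of_nonneg ht.1]
    exact ht.2.trans (min_le_left _ _)
  simpa [hv₀ x hx] using hclose (x, t) ⟨hx, ht₁⟩ (x, 0) ⟨hx, left_mem_Icc.2 zero_le_one⟩ hdist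

theorem abs_integral_Ioi_sub_integral_Ioi_le {f : ℝ → ℝ} {τ ε : ℝ} (hf : IntegrableOn f (Ioi 0))
    (hε : ∀ t ∈ Icc 0 τ, |f t| ≤ ε) {t : ℝ} (ht : t ∈ Icc 0 τ) :
    |(∫ s in Ioi t, f s) - ∫ s in Ioi 0, f s| ≤ ε * t := by
  have hsplit := intervalIntegral.integral_interval_add_Ioi hf (hf.mono_set (Ioi_subset_Ioi ht.1))
  rw [← hsplit, sub_add_cancel_right, abs_neg]
  have := intervalIntegral.norm_integral_le_of_norm_le_const (a := 0) (b := t) (f := f) (C := ε)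
    fun s hs => by
      rw [uIoc_of_le ht.1] at hs
      exact hε s ⟨hs.1.le, hs.2.trans ht.2⟩
  rwa [sub_zero, abs_of_nonneg ht.1] at this

theorem continuousOn_Ioi_section (hv : ContinuousOn (fun z : ℝ × ℝ => v z.1 z.2) (Icc a b ×ˢ Ici 0))
    {x : ℝ} (hx : x ∈ Icc a b) : ContinuousOn (v x) (Ioi 0) :=
  hv.comp (f := fun t => (x, t)) (by fun_prop) fun _ ht => ⟨hx, (mem_Ioi.1 ht).le⟩

theorem integrableOn_Ioi_section (hv : ContinuousOn (fun z : ℝ × ℝ => v z.1 z.2) (Icc a b ×ˢ Ici 0))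
    (hbound : ∀ x ∈ Icc a b, ∀ t ∈ Ici 0, |v x t| ≤ g t) (hgint : IntegrableOn g (Ioi 0))
    {x : ℝ} (hx : x ∈ Icc a b) : IntegrableOn (v x) (Ioi 0) := by
  refine hgint.mono' ((continuousOn_Ioi_section hv hx).aestronglyMeasurable measurableSet_Ioi) ?_
  filter_upwards [ae_restrict_mem measurableSet_Ioi] with t ht
  exact hbound x hx t (mem_Ioi.1 ht).le

theorem continuousOn_integral_Ioi
    (hv : ContinuousOn (fun z : ℝ × ℝ => v z.1 z.2) (Icc a b ×ˢ Ici 0))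
    (hbound : ∀ x ∈ Icc a b, ∀ t ∈ Ici 0, |v x t| ≤ g t) (hgint : IntegrableOn g (Ioi 0)) :
    ContinuousOn (fun x => ∫ t in Ioi 0, v x t) (Icc a b) := by
  refine continuousOn_of_dominated (bound := g)
    (fun x hx => (continuousOn_Ioi_section hv hx).aestronglyMeasurable measurableSet_Ioi)
    (fun x hx => ?_) hgint ?_
  all_goals filter_upwards [ae_restrict_mem measurableSet_Ioi] with t ht
  · exact hbound x hx t (mem_Ioi.1 ht).le
  · exact hv.comp (f := fun x => (x, t)) (by fun_prop) fun _ hx => ⟨hx, (mem_Ioi.1 ht).le⟩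

theorem isApproxEquilibrium_integral_Ioi (hab : a ≤ b)
    (hv : ContinuousOn (fun z : ℝ × ℝ => v z.1 z.2) (Icc a b ×ˢ Ici 0))
    (h : SolvesHeatOn (Ioo a b) (Ioi 0) v (fun x t => -(Q x * v x t)))
    (hv₀ : ∀ x ∈ Icc a b, v x 0 = 0) (hbound : ∀ x ∈ Icc a b, ∀ t ∈ Ici 0, |v x t| ≤ g t)
    (hg : AntitoneOn g (Ici 0)) (hgint : IntegrableOn g (Ioi 0)) :
    IsApproxEquilibrium a b Q (fun x => ∫ t in Ioi 0, v x t) := by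
  intro η hη
  obtain ⟨τ, hτ, hτ₁, hsmall⟩ := exists_window_forall_abs_le hv hv₀ (half_pos hη)
  have hint : IntegrableOn (timeShift hv τ) (Ioi 0) := integrableOn_timeShift hab hbound hg hgint
  obtain ⟨f, ⟨R, hfR, hR⟩, hf⟩ := Metric.mem_closure_iff.1
    (integral_timeShift_mem_closure (hv := hv) (τ := τ) h) (η / 2 * τ) (by positivity)
  have hRc : ContinuousOn (fun z : ℝ × ℝ => R z.1 z.2) (Icc a b ×ˢ Icc 0 τ) := by
    refine continuousOn_iff_continuous_domRestrict.2 ?_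
    refine (f.continuous.comp (f := fun z : Icc a b ×ˢ Icc 0 τ =>
      (⟨z.1.1, z.2.1⟩, ⟨z.1.2, z.2.2⟩)) (by fun_prop)).congr fun z => hfR _
  refine ⟨τ, hτ, hτ₁, R, hRc, hR, fun x hx t ht => ?_⟩
  have hR_tail : |R x t - ∫ s in Ioi t, v x s| ≤ η / 2 * τ := by
    have := (ContinuousMap.dist_apply_le_dist (⟨x, hx⟩, ⟨t, ht⟩)).trans hf.le
    rwa [integral_timeShift_apply hint, hfR, dist_comm] at this
  have htail_full := abs_integral_Ioi_sub_integral_Ioi_le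
    (integrableOn_Ioi_section hv hbound hgint hx) (hsmall x hx) ht
  calc |R x t - ∫ s in Ioi 0, v x s|
      ≤ |R x t - ∫ s in Ioi t, v x s| + |(∫ s in Ioi t, v x s) - ∫ s in Ioi 0, v x s| :=
        abs_sub_le _ _ _
    _ ≤ η / 2 * τ + η / 2 * τ :=
        add_le_add hR_tail (htail_full.trans (mul_le_mul_of_nonneg_left ht.2 (half_pos hη).le))
    _ = η * τ := by ring

theorem exists_solvesSturmLiouvilleOn_integral_Ioi (hab : a < b) (hQ : ContinuousOn Q (Icc a b))
    (hv : ContinuousOn (fun z : ℝ × ℝ => v z.1 z.2) (Icc a b ×ˢ Ici 0))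
    (h : SolvesHeatOn (Ioo a b) (Ioi 0) v (fun x t => -(Q x * v x t)))
    (hv₀ : ∀ x ∈ Icc a b, v x 0 = 0) (hbound : ∀ x ∈ Icc a b, ∀ t ∈ Ici 0, |v x t| ≤ g t)
    (hg : AntitoneOn g (Ici 0)) (hgint : IntegrableOn g (Ioi 0)) :
    ∃ U', SolvesSturmLiouvilleOn a b Q (fun x => ∫ t in Ioi 0, v x t) U' :=
  (isApproxEquilibrium_integral_Ioi hab.le hv h hv₀ hbound hg hgint).exists_solvesSturmLiouvilleOn
    hab hQ (continuousOn_integral_Ioi hv hbound hgint)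

end LaplaceIntegral

section ParametricIntegral

theorem hasDerivWithinAt_integral_of_dominated_of_convex {Ω E : Type*} [MeasurableSpace Ω]
    {μ : Measure Ω} [NormedAddCommGroup E] [NormedSpace ℝ E] {s : Set ℝ} (hs : Convex ℝ s)
    {F F' : ℝ → Ω → E} {bound : Ω → ℝ} (hF : ∀ x ∈ s, Integrable (F x) μ)
    (hderiv : ∀ᵐ ω ∂μ, ∀ x ∈ s, HasDerivWithinAt (F · ω) (F' x ω) s x)
    (hle : ∀ᵐ ω ∂μ, ∀ x ∈ s, ‖F' x ω‖ ≤ bound ω) (hbound : Integrable bound μ) {x₀ : ℝ}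
    (hx₀ : x₀ ∈ s) :
    HasDerivWithinAt (fun x => ∫ ω, F x ω ∂μ) (∫ ω, F' x₀ ω ∂μ) s x₀ := by
  have hslope : ∀ x ∈ s, ∫ ω, slope (F · ω) x₀ x ∂μ = slope (fun x => ∫ ω, F x ω ∂μ) x₀ x :=
    fun x hx => by
      simp only [slope_def_module]
      rw [integral_smul, integral_sub (hF x hx) (hF x₀ hx₀)]
  have hmem : ∀ᶠ x in 𝓝[s \ {x₀}] x₀, x ∈ s \ {x₀} := self_mem_nhdsWithin
  rw [hasDerivWithinAt_iff_tendsto_slope]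
  refine Tendsto.congr' (hmem.mono fun x hx => hslope x hx.1)
    (tendsto_integral_filter_of_dominated_convergence bound (hmem.mono fun x hx => ?_)
      (hmem.mono fun x hx => ?_) hbound ?_)
  · simp only [slope_def_module]
    exact (((hF x hx.1).sub (hF x₀ hx₀)).smul _).aestronglyMeasurable
  · filter_upwards [hderiv, hle] with ω hderiv hle
    have hlip := hs.norm_image_sub_le_of_norm_hasDerivWithin_le hderiv hle hx₀ hx.1
    rw [slope_def_module, norm_smul, norm_inv]
    exact (inv_mul_le_iff₀ (norm_pos_iff.2 (sub_ne_zero.2 hx.2))).2 (hlip.trans_eq (mul_comm ..))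
  · filter_upwards [hderiv] with ω hderiv
    exact hasDerivWithinAt_iff_tendsto_slope.1 (hderiv x₀ hx₀)

theorem integral_Ioi_eq_intervalIntegral_of_forall_gt {E : Type*} [NormedAddCommGroup E]
    [NormedSpace ℝ E] {f : ℝ → E} {a T : ℝ} (haT : a ≤ T) (hf : ∀ t > T, f t = 0) :
    ∫ t in Ioi a, f t = ∫ t in a..T, f t := by
  rw [intervalIntegral.integral_of_le haT]
  exact setIntegral_eq_of_subset_of_forall_sdiff_eq_zero measurableSet_Ioi Ioc_subset_Ioi_self
    fun t ht => hf t (not_le.1 fun htT => ht.2 ⟨ht.1, htT⟩)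

end ParametricIntegral

section LaplaceTransform

variable {q a : ℝ → ℝ} {u ux uxx ut : ℝ → ℝ → ℝ} {C c lam : ℝ}

theorem IsSLSolution.solvesSturmLiouvilleOn {φ φ' : ℝ → ℝ} (h : IsSLSolution q (-lam) φ φ') :
    SolvesSturmLiouvilleOn 0 1 (fun x => q x + lam) φ φ' := fun x hx =>
  ⟨(h.1 x hx).hasDerivWithinAt, (h.2.1 x hx).hasDerivWithinAt.congr_deriv (by ring)⟩

theorem IsHeatSolution.solvesHeatOn_exp_mul (h : IsHeatSolution q a u ux uxx ut) (lam : ℝ) :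
    SolvesHeatOn (Ioo 0 1) (Ioi 0) (fun x t => Real.exp (-lam * t) * u x t)
      (fun x t => -((q x + lam) * (Real.exp (-lam * t) * u x t))) := by
  obtain ⟨-, hux, huxx, -, hut, -, heq, -, -⟩ := h
  have hu : SolvesHeatOn (Ioo 0 1) (Ioi 0) u (fun x t => -(q x * u x t)) :=
    ⟨ux, uxx, ut, fun x hx t ht => ⟨hux t ht x (Ioo_subset_Icc_self hx),
      huxx t ht x (Ioo_subset_Icc_self hx), hut x (Ioo_subset_Icc_self hx) t ht,
      (heq x hx t ht).trans (sub_eq_add_neg ..)⟩⟩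
  exact (hu.exp_mul (-lam)).congr_source fun x _ t _ => by ring

namespace HeatGrowthBound

theorem const_nonneg (h : HeatGrowthBound u ux C c) : 0 ≤ C := by
  have := h 0 (left_mem_Icc.2 zero_le_one) 0 self_mem_Ici
  rw [mul_zero, Real.exp_zero, mul_one] at this
  exact (by positivity : 0 ≤ |u 0 0| + |ux 0 0|).trans this

theorem abs_exp_mul_add_le (h : HeatGrowthBound u ux C c) {x t : ℝ} (hx : x ∈ Icc 0 1)
    (ht : t ∈ Ici 0) : |Real.exp (-lam * t) * u x t| + |Real.exp (-lam * t) * ux x t| ≤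
      C * Real.exp (-(lam - c) * t) := by
  calc |Real.exp (-lam * t) * u x t| + |Real.exp (-lam * t) * ux x t|
      = Real.exp (-lam * t) * (|u x t| + |ux x t|) := by simp only [abs_mul, Real.abs_exp, mul_add]
    _ ≤ Real.exp (-lam * t) * (C * Real.exp (c * t)) :=
        mul_le_mul_of_nonneg_left (h x hx t ht) (Real.exp_pos _).le
    _ = C * Real.exp (-(lam - c) * t) := by
        rw [mul_left_comm, ← Real.exp_add]
        ring_nf

theorem abs_exp_mul_le (h : HeatGrowthBound u ux C c) {x : ℝ} (hx : x ∈ Icc 0 1) {t : ℝ}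
    (ht : t ∈ Ici 0) : |Real.exp (-lam * t) * u x t| ≤ C * Real.exp (-(lam - c) * t) :=
  (le_add_of_nonneg_right (abs_nonneg _)).trans (h.abs_exp_mul_add_le hx ht)

theorem abs_exp_mul_deriv_le (h : HeatGrowthBound u ux C c) {x : ℝ} (hx : x ∈ Icc 0 1) {t : ℝ}
    (ht : t ∈ Ici 0) : |Real.exp (-lam * t) * ux x t| ≤ C * Real.exp (-(lam - c) * t) :=
  (le_add_of_nonneg_left (abs_nonneg _)).trans (h.abs_exp_mul_add_le hx ht)

end HeatGrowthBound

theorem integrableOn_const_mul_exp_neg (hlam : c < lam) :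
    IntegrableOn (fun t => C * Real.exp (-(lam - c) * t)) (Ioi 0) :=
  (integrableOn_exp_mul_Ioi (neg_neg_of_pos (sub_pos.2 hlam)) 0).const_mul C

theorem antitone_const_mul_exp_neg (hC : 0 ≤ C) (hlam : c ≤ lam) :
    Antitone fun t => C * Real.exp (-(lam - c) * t) := fun _ _ hst =>
  mul_le_mul_of_nonneg_left (Real.exp_le_exp.2
    (mul_le_mul_of_nonpos_left hst (neg_nonpos.2 (sub_nonneg.2 hlam)))) hC

namespace IsHeatSolution

theorem continuousOn_exp_mul (h : IsHeatSolution q a u ux uxx ut) (lam : ℝ) :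
    ContinuousOn (fun z : ℝ × ℝ => Real.exp (-lam * z.2) * u z.1 z.2) (Icc 0 1 ×ˢ Ici 0) :=
  ContinuousOn.mul (by fun_prop) h.1

theorem hasDerivWithinAt_laplace (h : IsHeatSolution q a u ux uxx ut)
    (hbound : HeatGrowthBound u ux C c) (hlam : c < lam) {x : ℝ} (hx : x ∈ Icc 0 1) :
    HasDerivWithinAt (fun x => ∫ t in Ioi 0, Real.exp (-lam * t) * u x t)
      (∫ t in Ioi 0, Real.exp (-lam * t) * ux x t) (Icc 0 1) x := by
  have hint := integrableOn_const_mul_exp_neg (C := C) hlam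
  refine hasDerivWithinAt_integral_of_dominated_of_convex
    (F' := fun x t => Real.exp (-lam * t) * ux x t) (convex_Icc 0 1) (fun y hy =>
    integrableOn_Ioi_section (h.continuousOn_exp_mul lam) (fun _ hy _ => hbound.abs_exp_mul_le hy)
      hint hy) ?_ ?_ hint hx
  all_goals filter_upwards [ae_restrict_mem measurableSet_Ioi] with t ht y hy
  · exact ((h.2.1 t ht y hy).const_mul _).hasDerivWithinAt
  · exact hbound.abs_exp_mul_deriv_le hy (mem_Ioi.1 ht).le

theorem solvesSturmLiouvilleOn_laplace (hq : ContinuousOn q (Icc 0 1))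
    (h : IsHeatSolution q a u ux uxx ut) (hbound : HeatGrowthBound u ux C c) (hlam : c < lam) :
    SolvesSturmLiouvilleOn 0 1 (fun x => q x + lam)
      (fun x => ∫ t in Ioi 0, Real.exp (-lam * t) * u x t)
      (fun x => ∫ t in Ioi 0, Real.exp (-lam * t) * ux x t) := by
  have ⟨_, _, _, _, _, _, _, hinit, _⟩ := h
  obtain ⟨U', hU'⟩ := exists_solvesSturmLiouvilleOn_integral_Ioi zero_lt_one
    (hq.add continuousOn_const) (h.continuousOn_exp_mul lam) (h.solvesHeatOn_exp_mul lam)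
    (fun x hx => mul_eq_zero_of_right _ (hinit x hx))
    (fun _ hx _ => hbound.abs_exp_mul_le hx)
    ((antitone_const_mul_exp_neg hbound.const_nonneg hlam.le).antitoneOn _)
    (integrableOn_const_mul_exp_neg hlam)
  have hflux : ∀ x ∈ Icc 0 1, ∫ t in Ioi 0, Real.exp (-lam * t) * ux x t = U' x := fun x hx =>
    (uniqueDiffOn_Icc zero_lt_one x hx).eq_deriv _ (h.hasDerivWithinAt_laplace hbound hlam hx)
      (hU' x hx).1
  exact fun x hx =>
    ⟨h.hasDerivWithinAt_laplace hbound hlam hx, (hU' x hx).2.congr hflux (hflux x hx)⟩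

end IsHeatSolution

theorem laplace_transform_identity_flux_left_general
    (hq : ContinuousOn q (Icc 0 1)) (hu : IsHeatSolution q a u ux uxx ut)
    (hbound : HeatGrowthBound u ux C c) (hlam : c < lam)
    {φ φ' : ℝ → ℝ} (hφ : IsSLSolution q (-lam) φ φ') :
    (∫ t in Ioi 0, Real.exp (-lam * t) * ux 0 t) * φ 1
      = ∫ t in Ioi 0, Real.exp (-lam * t) * a t := by
  obtain ⟨K, hK⟩ := isCompact_Icc.exists_bound_of_continuousOn
    (hq.add (continuousOn_const (c := lam)))
  have ⟨_, _, _, _, _, _, _, _, hboundary⟩ := hu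
  have hU₀ : ∫ t in Ioi 0, Real.exp (-lam * t) * u 0 t = 0 :=
    setIntegral_eq_zero_of_forall_eq_zero fun t ht => mul_eq_zero_of_right _ (hboundary t ht).1
  set B₀ := ∫ t in Ioi 0, Real.exp (-lam * t) * ux 0 t with hB₀
  have hUφ : EqOn (fun x => ∫ t in Ioi 0, Real.exp (-lam * t) * u x t) (fun x => B₀ * φ x)
      (Icc 0 1) :=
    (hu.solvesSturmLiouvilleOn_laplace hq hbound hlam).eqOn hK
      (hφ.solvesSturmLiouvilleOn.const_mul B₀) (by simp only [hU₀, hφ.2.2.1, mul_zero])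
      (by simp only [hφ.2.2.2, mul_one, hB₀])
  calc B₀ * φ 1 = ∫ t in Ioi 0, Real.exp (-lam * t) * u 1 t :=
        (hUφ (right_mem_Icc.2 zero_le_one)).symm
    _ = ∫ t in Ioi 0, Real.exp (-lam * t) * a t :=
        setIntegral_congr_fun measurableSet_Ioi fun t ht =>
          congrArg (Real.exp (-lam * t) * ·) (hboundary t ht).2

end LaplaceTransform

/-- Laplace-transform identity `B₀(λ) φ(1,-λ) = A(λ)` for the flux at
`x = 0`, valid for every real `λ > c`. -/
theorem laplace_transform_identity_flux_left
    (q a : ℝ → ℝ) (hq : ContinuousOn q (Set.Icc 0 1))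
    (ha : IsAdmissiblePulse a)
    (T : ℝ) (hT : 0 < T) (hsupp : ∀ t > T, a t = 0)
    (u ux uxx ut : ℝ → ℝ → ℝ) (hu : IsHeatSolution q a u ux uxx ut)
    (C c : ℝ) (hC : 0 < C) (hc : 0 < c) (hbound : HeatGrowthBound u ux C c)
    (lam : ℝ) (hlam : c < lam)
    (φ φ' : ℝ → ℝ) (hφ : IsSLSolution q (-lam) φ φ') :
    (∫ t in Set.Ioi (0:ℝ), Real.exp (-lam * t) * ux 0 t) * φ 1
      = ∫ t in (0:ℝ)..T, Real.exp (-lam * t) * a t := by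
  rw [laplace_transform_identity_flux_left_general hq hu hbound hlam hφ]
  exact integral_Ioi_eq_intervalIntegral_of_forall_gt hT.le fun t ht =>
    mul_eq_zero_of_right _ (hsupp t ht)
end
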